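/- arXiv:1403.4231 — 2 statements merged into one kernel-verified Lean document; each statement's English description precedes it below -/
import Mathlib

section
/- Let ω^{ij} be a smooth antisymmetric bivector and Γ^i_{jk} smooth Christoffel symbols on an open set U ⊆ ℝⁿ such that the pair (ω, ∇) is Poisson-compatible. Define H^{ij} := (1/4) ω^{is}(T^j_{nm;s} − 2 R^j_{nms}) dx^m ∧ dx^n, and over ℝ[λ]/(λ²) define for homogeneous forms ξ ∧₁ η := ξ ∧ η + (λ/2) ω^{ij} ∇_i ξ ∧ ∇_j η + λ (−1)^{|ξ|+1} H^{ij} ∧ (∂_i⌟ξ) ∧ (∂_j⌟η), extended λ-bilinearly. Then (Ω(U) ⊗ ℝ[λ]/(λ²), ∧₁, d) is a differential graded algebra: ∧₁ is associative, and d(ξ ∧₁ η) = dξ ∧₁ η + (−1)^{|ξ|} ξ ∧₁ dη for all homogeneous ξ and all η, where d is the undeformed exterior derivative. -/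
namespace Stmt12

variable {n : ℕ}

/-- A point of the coordinate chart. -/
abbrev Pt (n : ℕ) := Fin n → ℝ

/-- The coefficient family of a differential form: a `p`-form is a family
`ξ_{a 0, …, a (p−1)}` of functions (only the first `p` index slots are used). -/
abbrev Form (n : ℕ) := (ℕ → Fin n) → Pt n → ℝ

/-- Partial derivative in the `i`-th coordinate direction. -/
noncomputable def pd (i : Fin n) (f : Pt n → ℝ) (x : Pt n) : ℝ :=
  fderiv ℝ f x (Pi.single i 1)

/-- Wedge product of a `p`-form and a `q`-form (coordinate formula). -/
noncomputable def wedge (p q : ℕ) (ξ η : Form n) : Form n := fun a x =>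
  ((p.factorial * q.factorial : ℕ) : ℝ)⁻¹ *
    ∑ σ : Equiv.Perm (Fin (p + q)),
      ((Equiv.Perm.sign σ : ℤ) : ℝ) *
        ξ (fun t => if h : t < p then a ((σ ⟨t, by omega⟩ : Fin (p + q)) : ℕ) else a t) x *
        η (fun t => if h : t < q then a ((σ ⟨p + t, by omega⟩ : Fin (p + q)) : ℕ) else a t) x

/-- Exterior derivative of a `p`-form:
`(dξ)_{a_0⋯a_p} = Σ_k (−1)^k ∂_{a_k} ξ_{a_0⋯(omit a_k)⋯a_p}`. -/
noncomputable def extd (p : ℕ) (ξ : Form n) : Form n := fun a x =>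
  ∑ k : Fin (p + 1),
    (-1 : ℝ) ^ (k : ℕ) *
      pd (a (k : ℕ)) (ξ (fun t => if t < (k : ℕ) then a t else a (t + 1))) x

/-- Interior product of a `p`-form with the `m`-th coordinate vector field
(zero on `0`-forms). -/
def intr (p : ℕ) (m : Fin n) (ξ : Form n) : Form n :=
  if p = 0 then (fun _ _ => 0)
  else fun a x => ξ (fun t => if t = 0 then m else a (t - 1)) x

/-- Interior product of a `p`-form with a vector field `v` (zero on `0`-forms). -/
noncomputable def iprod (p : ℕ) (v : Fin n → Pt n → ℝ) (ξ : Form n) : Form n :=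
  if p = 0 then (fun _ _ => 0)
  else fun a x => ∑ m, v m x * ξ (fun t => if t = 0 then m else a (t - 1)) x

/-- Covariant derivative of a `p`-form:
`(∇_i ξ)_{a_1⋯a_p} = ∂_i ξ_{a_1⋯a_p} − Σ_k Γ^m_{i a_k} ξ_{⋯ m ⋯}`. -/
noncomputable def nabla (Γ : Fin n → Fin n → Fin n → Pt n → ℝ) (i : Fin n) (p : ℕ)
    (ξ : Form n) : Form n := fun a x =>
  pd i (ξ a) x
    - ∑ k : Fin p, ∑ m, Γ m i (a (k : ℕ)) x * ξ (fun t => if t = (k : ℕ) then m else a t) x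

/-- Multiplication of a form by a scalar function. -/
def fmul (f : Pt n → ℝ) (ξ : Form n) : Form n := fun a x => f x * ξ a x

/-- `ξ` depends only on its first `p` index slots. -/
def DependsOn (p : ℕ) (ξ : Form n) : Prop :=
  ∀ a b : ℕ → Fin n, (∀ t, t < p → a t = b t) → ξ a = ξ b

/-- `ξ` is totally antisymmetric in its first `p` index slots. -/
def IsAnti (p : ℕ) (ξ : Form n) : Prop :=
  ∀ (a : ℕ → Fin n) (i j : ℕ), i < p → j < p → i ≠ j →
    ∀ x, ξ (fun t => a (Equiv.swap i j t)) x = - ξ a x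

/-- `ξ` has smooth coefficients on `U`. -/
def SmoothOn (U : Set (Pt n)) (ξ : Form n) : Prop :=
  ∀ a, ContDiffOn ℝ (⊤ : ℕ∞) (ξ a) U

/-- `ξ` is (the coefficient family of) a smooth `p`-form on `U`. -/
def IsPForm (U : Set (Pt n)) (p : ℕ) (ξ : Form n) : Prop :=
  DependsOn p ξ ∧ IsAnti p ξ ∧ SmoothOn U ξ

/-- Torsion `T^i_{jk} = Γ^i_{jk} - Γ^i_{kj}`. -/
def Tor (Γ : Fin n → Fin n → Fin n → Pt n → ℝ) (i j k : Fin n) (x : Pt n) : ℝ :=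
  Γ i j k x - Γ i k j x

/-- Curvature `R^l_{ijk} = ∂_j Γ^l_{ki} − ∂_k Γ^l_{ji} + Γ^m_{ki} Γ^l_{jm} − Γ^m_{ji} Γ^l_{km}`. -/
noncomputable def Rc (Γ : Fin n → Fin n → Fin n → Pt n → ℝ) (l i j k : Fin n)
    (x : Pt n) : ℝ :=
  pd j (Γ l k i) x - pd k (Γ l j i) x
    + ∑ m, Γ m k i x * Γ l j m x - ∑ m, Γ m j i x * Γ l k m x

/-- Covariant derivative of the torsion:
`T^j_{ab;s} = ∂_s T^j_{ab} + Γ^j_{sp} T^p_{ab} − Γ^p_{sa} T^j_{pb} − Γ^p_{sb} T^j_{ap}`. -/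
noncomputable def covT (Γ : Fin n → Fin n → Fin n → Pt n → ℝ) (j a b s : Fin n)
    (x : Pt n) : ℝ :=
  pd s (Tor Γ j a b) x + ∑ p, Γ j s p x * Tor Γ p a b x
    - ∑ p, Γ p s a x * Tor Γ j p b x - ∑ p, Γ p s b x * Tor Γ j a p x

/-- The pair `(ω, ∇)` is Poisson-compatible on `U`. -/
def PoissonCompat (U : Set (Pt n)) (ω : Fin n → Fin n → Pt n → ℝ)
    (Γ : Fin n → Fin n → Fin n → Pt n → ℝ) : Prop :=
  ∀ i j m, ∀ x ∈ U,
    pd m (ω i j) x + ∑ k, ω k j x * Γ i k m x + ∑ k, ω i k x * Γ j k m x = 0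

/-- The 2-form `H^{ij} = (1/4) ω^{is}(T^j_{nm;s} − 2 R^j_{nms}) dx^m ∧ dx^n`
(as a coefficient family, slots `(a 0, a 1) = (m, n)`). -/
noncomputable def Hform (ω : Fin n → Fin n → Pt n → ℝ)
    (Γ : Fin n → Fin n → Fin n → Pt n → ℝ) (i j : Fin n) : Form n := fun a x =>
  (1 / 4 : ℝ) * ∑ s, ω i s x *
    ((covT Γ j (a 1) (a 0) s x - 2 * Rc Γ j (a 1) (a 0) s x)
      - (covT Γ j (a 0) (a 1) s x - 2 * Rc Γ j (a 0) (a 1) s x))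

/-- The `λ`-correction term `(1/2) ω^{ij} ∇_i ξ ∧ ∇_j η` of the functorial product `∧_Q`. -/
noncomputable def Qcorr (ω : Fin n → Fin n → Pt n → ℝ)
    (Γ : Fin n → Fin n → Fin n → Pt n → ℝ) (p q : ℕ) (ξ η : Form n) : Form n :=
  (2⁻¹ : ℝ) • ∑ i, ∑ j, fmul (ω i j) (wedge p q (nabla Γ i p ξ) (nabla Γ j q η))

/-- `λ`-extended forms over `ℝ[λ]/(λ²)`: a pair `(ξ₀, ξ₁)` stands for `ξ₀ + λ ξ₁`. -/
abbrev FormL (n : ℕ) := Form n × Form n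

/-- Both components are smooth `p`-forms on `U`. -/
def IsPFormL (U : Set (Pt n)) (p : ℕ) (ξ : FormL n) : Prop :=
  IsPForm U p ξ.1 ∧ IsPForm U p ξ.2

/-- The order-`λ` nonlinear correction
`(−1)^{|ξ|+1} Σ_{i,j} H^{ij} ∧ (∂_i⌟ξ) ∧ (∂_j⌟η)`. -/
noncomputable def HatCorr (ω : Fin n → Fin n → Pt n → ℝ)
    (Γ : Fin n → Fin n → Fin n → Pt n → ℝ) (p q : ℕ) (ξ η : Form n) : Form n :=
  ((-1 : ℝ) ^ (p + 1)) •
    ∑ i, ∑ j,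
      wedge (2 + (p - 1)) (q - 1)
        (wedge 2 (p - 1) (Hform ω Γ i j) (intr p i ξ)) (intr q j η)

/-- The quantum wedge product `∧₁` on `λ`-extended forms:
`ξ ∧₁ η = ξ ∧ η + (λ/2) ω^{ij} ∇_i ξ ∧ ∇_j η
  + λ (−1)^{|ξ|+1} H^{ij} ∧ (∂_i⌟ξ) ∧ (∂_j⌟η)`, extended `λ`-bilinearly. -/
noncomputable def wedge1 (ω : Fin n → Fin n → Pt n → ℝ)
    (Γ : Fin n → Fin n → Fin n → Pt n → ℝ) (p q : ℕ) (ξ η : FormL n) : FormL n :=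
  (wedge p q ξ.1 η.1,
   wedge p q ξ.1 η.2 + wedge p q ξ.2 η.1
     + Qcorr ω Γ p q ξ.1 η.1 + HatCorr ω Γ p q ξ.1 η.1)

/-- The (undeformed) exterior derivative on `λ`-extended forms. -/
noncomputable def extdL (p : ℕ) (ξ : FormL n) : FormL n := (extd p ξ.1, extd p ξ.2)

/-- The 1-form `Γ^i_{r p} dx^p` (with `i, r` fixed). -/
def GammaOne (Γ : Fin n → Fin n → Fin n → Pt n → ℝ) (i r : Fin n) : Form n :=
  fun a x => Γ i r (a 0) x

/-- Symmetry of the `H^{ij}` in `i, j` (as 2-forms on `U`). -/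
def HSymm (U : Set (Pt n)) (ω : Fin n → Fin n → Pt n → ℝ)
    (Γ : Fin n → Fin n → Fin n → Pt n → ℝ) : Prop :=
  ∀ i j a, ∀ x ∈ U, Hform ω Γ i j a x = Hform ω Γ j i a x

/-- The condition `dH^{ij} + Γ^i_{rp} dx^p ∧ H^{rj} + Γ^j_{rp} dx^p ∧ H^{ir} = 0` on `U`. -/
def HClosed (U : Set (Pt n)) (ω : Fin n → Fin n → Pt n → ℝ)
    (Γ : Fin n → Fin n → Fin n → Pt n → ℝ) : Prop :=
  ∀ i j a, ∀ x ∈ U,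
    (extd 2 (Hform ω Γ i j)
      + ∑ r, wedge 1 2 (GammaOne Γ i r) (Hform ω Γ r j)
      + ∑ r, wedge 1 2 (GammaOne Γ j r) (Hform ω Γ i r)) a x = 0

/-- Associativity of `∧₁` on `U`, on (λ-extended) homogeneous smooth forms. -/
def WedgeAssoc (U : Set (Pt n)) (ω : Fin n → Fin n → Pt n → ℝ)
    (Γ : Fin n → Fin n → Fin n → Pt n → ℝ) : Prop :=
  ∀ (p q r : ℕ) (ξ η ζ : FormL n),
    IsPFormL U p ξ → IsPFormL U q η → IsPFormL U r ζ →
    ∀ a, ∀ x ∈ U,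
      (wedge1 ω Γ (p + q) r (wedge1 ω Γ p q ξ η) ζ).1 a x
          = (wedge1 ω Γ p (q + r) ξ (wedge1 ω Γ q r η ζ)).1 a x ∧
      (wedge1 ω Γ (p + q) r (wedge1 ω Γ p q ξ η) ζ).2 a x
          = (wedge1 ω Γ p (q + r) ξ (wedge1 ω Γ q r η ζ)).2 a x

/-- The graded Leibniz rule for `d` with respect to `∧₁` on `U`. -/
def LeibnizRule (U : Set (Pt n)) (ω : Fin n → Fin n → Pt n → ℝ)
    (Γ : Fin n → Fin n → Fin n → Pt n → ℝ) : Prop :=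
  ∀ (p q : ℕ) (ξ η : FormL n),
    IsPFormL U p ξ → IsPFormL U q η →
    ∀ a, ∀ x ∈ U,
      (extdL (p + q) (wedge1 ω Γ p q ξ η)).1 a x
          = (wedge1 ω Γ (p + 1) q (extdL p ξ) η
              + ((-1 : ℝ) ^ p) • wedge1 ω Γ p (q + 1) ξ (extdL q η)).1 a x ∧
      (extdL (p + q) (wedge1 ω Γ p q ξ η)).2 a x
          = (wedge1 ω Γ (p + 1) q (extdL p ξ) η
              + ((-1 : ℝ) ^ p) • wedge1 ω Γ p (q + 1) ξ (extdL q η)).2 a x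

/-!
Forms on `U` live in the algebra `R ⊗ Λ(ℝⁿ)`, where `R` is the algebra of smooth functions, and
the calculus there is governed by derivations: `∇_i` is a derivation, while `∂_i ⌟` and `d` are
graded derivations. If `S^{ij}` is even and central and `f_i`, `g_j` are derivations, or graded
derivations with the sign moved to the right factor for `f_i` and to the left factor for `g_j`,
then `(X, Y) ↦ S^{ij} ∧ f_i X ∧ g_j Y` is a Hochschild cocycle. The order-`λ` part of `∧₁` is a sum
of two such cocycles, and this is exactly associativity.

For the Leibniz rule, let `A^m_i = Γ^m_{ia} dx^a` and `Θ = dA + A ∧ A`. Then `H = -½ ω Θᵀ`, and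
Poisson compatibility says `dω = -(A ω + ω Aᵀ)`. Applying `d` gives `Θ ω = -ω Θᵀ`, and the Bianchi
identity for `Θ` gives `dH = -(A H + H Aᵀ)`. Both matrices are thus parallel, so `d` of the two
corrections involves only the exterior covariant derivatives of `∇_i X` and `∂_i ⌟ X`. By the Ricci
identity the former produces `Θ^j_i ∧ (∂_j ⌟ X)`, which `ω` turns into terms of the shape
`H^{ij} ∧ (∂_i ⌟ X) ∧ ∇_j Y` and `H^{ij} ∧ ∇_i X ∧ (∂_j ⌟ Y)`; by Cartan's formula the latter
produces the same terms with opposite sign.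
-/

section CliffordAlgebra

open CliffordAlgebra

variable {K M : Type*} [CommRing K] [AddCommGroup M] [Module K M] {Q : QuadraticForm K M}

theorem contractLeft_mul (f : Module.Dual K M) (X Y : CliffordAlgebra Q) :
    contractLeft f (X * Y) = contractLeft f X * Y + involute X * contractLeft f Y := by
  induction X using CliffordAlgebra.left_induction with
  | algebraMap r => simp [contractLeft_algebraMap_mul, contractLeft_algebraMap]
  | add X₁ X₂ h₁ h₂ => rw [add_mul, map_add, h₁, h₂, map_add, map_add]; noncomm_ring
  | ι_mul X v h =>
    rw [mul_assoc, contractLeft_ι_mul, h, contractLeft_ι_mul, map_mul, involute_ι]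
    simp only [sub_mul, mul_add, neg_mul, smul_mul_assoc, mul_assoc]
    abel

theorem contractLeft_involute (f : Module.Dual K M) (X : CliffordAlgebra Q) :
    contractLeft f (involute X) = -involute (contractLeft f X) := by
  induction X using CliffordAlgebra.left_induction with
  | algebraMap r => simp [contractLeft_algebraMap]
  | add X₁ X₂ h₁ h₂ => rw [map_add, map_add, h₁, h₂, map_add, map_add, neg_add]
  | ι_mul X v h =>
    simp only [map_mul, involute_ι, neg_mul, map_neg, contractLeft_ι_mul, h, mul_neg, map_sub,
      map_smul]

theorem exteriorAlgebra_ι_mul (v : M) (X : ExteriorAlgebra K M) :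
    ExteriorAlgebra.ι K v * X = involute X * ExteriorAlgebra.ι K v := by
  induction X using CliffordAlgebra.left_induction with
  | algebraMap r => rw [AlgHom.commutes]; exact (Algebra.commutes r _).symm
  | add X₁ X₂ h₁ h₂ => rw [mul_add, h₁, h₂, map_add, add_mul]
  | ι_mul X w h =>
    rw [map_mul, involute_ι, mul_assoc (-_), ← h, ← mul_assoc, ← mul_assoc]
    rw [eq_neg_of_add_eq_zero_left (ExteriorAlgebra.ι_add_mul_swap v w), neg_mul, neg_mul, neg_mul]

end CliffordAlgebra

theorem prod_boole_append {K α : Type*} [CommSemiring K] [DecidableEq α] {p q : ℕ}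
    (u : Fin (p + q) → α) (b : Fin p → α) (c : Fin q → α) :
    ∏ t, (if u t = Fin.append b c t then (1 : K) else 0) =
      (if u ∘ Fin.castAdd q = b then 1 else 0) * (if u ∘ Fin.natAdd p = c then 1 else 0) := by
  rw [Fin.prod_univ_add]
  simp only [Fin.append_left, Fin.append_right, Finset.prod_boole, Finset.mem_univ, true_implies,
    funext_iff, Function.comp_apply]

/-- Differential forms in `n` coordinates with coefficients in an abstract `ℝ`-algebra `R` of
functions. -/
abbrev AlgForm (R : Type*) [CommRing R] [Algebra ℝ R] (n : ℕ) :=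
  TensorProduct ℝ R (ExteriorAlgebra ℝ (Fin n → ℝ))

namespace AlgForm

open scoped TensorProduct

variable {R : Type*} [CommRing R] [Algebra ℝ R]

/-- The grade involution, `(-1)^p` on `p`-forms; it carries all the signs of the calculus. -/
noncomputable def involute : AlgForm R n →ₐ[R] AlgForm R n :=
  Algebra.TensorProduct.map (AlgHom.id R R) CliffordAlgebra.involute

/-- The interior product with the `m`-th coordinate vector field. -/
noncomputable def contract (m : Fin n) : AlgForm R n →ₗ[R] AlgForm R n :=
  (CliffordAlgebra.contractLeft (Q := (0 : QuadraticForm ℝ (Fin n → ℝ)))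
    (LinearMap.proj m)).baseChange R

/-- A derivation of the coefficients applied to the coefficients of a form. -/
noncomputable def coeffDeriv (δ : Derivation ℝ R R) : AlgForm R n →ₗ[ℝ] AlgForm R n :=
  (δ : R →ₗ[ℝ] R).rTensor _

/-- The coordinate one-form `dx^k`. -/
noncomputable def dx (k : Fin n) : AlgForm R n :=
  1 ⊗ₜ ExteriorAlgebra.ι ℝ (Pi.single k 1)

/-- The one-form `g_k dx^k`. -/
noncomputable def oneForm : (Fin n → R) →ₗ[R] AlgForm R n := Fintype.linearCombination R dx

/-- The exterior derivative `dx^k ∧ ∂_k`. -/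
noncomputable def d (D : Fin n → Derivation ℝ R R) : AlgForm R n →ₗ[ℝ] AlgForm R n :=
  ∑ k, LinearMap.mulLeft ℝ (dx k) ∘ₗ coeffDeriv (D k)

section Operations

variable (X Y : AlgForm R n) (r : R) (m : Fin n) (δ : Derivation ℝ R R)

@[simp]
theorem involute_tmul (e : ExteriorAlgebra ℝ (Fin n → ℝ)) :
    involute (r ⊗ₜ e) = r ⊗ₜ[ℝ] CliffordAlgebra.involute e :=
  rfl

@[simp]
theorem contract_tmul (e : ExteriorAlgebra ℝ (Fin n → ℝ)) :
    contract m (r ⊗ₜ e) = r ⊗ₜ[ℝ] CliffordAlgebra.contractLeft (LinearMap.proj m) e :=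
  rfl

@[simp]
theorem coeffDeriv_tmul (e : ExteriorAlgebra ℝ (Fin n → ℝ)) :
    coeffDeriv δ (r ⊗ₜ e) = δ r ⊗ₜ[ℝ] e :=
  rfl

theorem involute_involute : involute (involute X) = X := by
  induction X using TensorProduct.induction_on with
  | zero => simp only [map_zero]
  | tmul r e => simp only [involute_tmul, CliffordAlgebra.involute_involute]
  | add X₁ X₂ h₁ h₂ => simp only [map_add, h₁, h₂]

theorem involute_dx (k : Fin n) : involute (dx k : AlgForm R n) = -dx k := by
  rw [dx, involute_tmul, ExteriorAlgebra.ι, CliffordAlgebra.involute_ι, TensorProduct.tmul_neg]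

theorem dx_mul (k : Fin n) : dx k * X = involute X * dx k := by
  induction X using TensorProduct.induction_on with
  | zero => simp only [map_zero, mul_zero, zero_mul]
  | tmul r e =>
    rw [dx, involute_tmul, Algebra.TensorProduct.tmul_mul_tmul,
      Algebra.TensorProduct.tmul_mul_tmul, exteriorAlgebra_ι_mul, mul_comm]
  | add X₁ X₂ h₁ h₂ => simp only [map_add, mul_add, add_mul, h₁, h₂]

theorem contract_mul :
    contract m (X * Y) = contract m X * Y + involute X * contract m Y := by
  induction X using TensorProduct.induction_on with
  | zero => simp only [map_zero, zero_mul, add_zero]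
  | add X₁ X₂ h₁ h₂ => simp only [map_add, add_mul, h₁, h₂]; abel
  | tmul r e =>
    induction Y using TensorProduct.induction_on with
    | zero => simp only [map_zero, mul_zero, add_zero]
    | add Y₁ Y₂ h₁ h₂ => simp only [map_add, mul_add, h₁, h₂]; abel
    | tmul s f =>
      simp only [Algebra.TensorProduct.tmul_mul_tmul, contract_tmul, involute_tmul,
        contractLeft_mul, TensorProduct.tmul_add]

theorem contract_involute : contract m (involute X) = -involute (contract m X) := by
  induction X using TensorProduct.induction_on with
  | zero => simp only [map_zero, neg_zero]
  | tmul r e =>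
    simp only [contract_tmul, involute_tmul, contractLeft_involute, TensorProduct.tmul_neg]
  | add X₁ X₂ h₁ h₂ => simp only [map_add, h₁, h₂, neg_add]

theorem contract_contract (l : Fin n) :
    contract l (contract m X) = -contract m (contract l X) := by
  induction X using TensorProduct.induction_on with
  | zero => simp only [map_zero, neg_zero]
  | tmul r e =>
    simp only [contract_tmul, ← TensorProduct.tmul_neg, ← CliffordAlgebra.contractLeft_comm]
  | add X₁ X₂ h₁ h₂ => simp only [map_add, h₁, h₂, neg_add]

theorem contract_dx (k : Fin n) :
    contract m (dx k : AlgForm R n) = if m = k then 1 else 0 := by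
  rw [dx, contract_tmul, ExteriorAlgebra.ι, CliffordAlgebra.contractLeft_ι, LinearMap.proj_apply,
    Pi.single_apply]
  split_ifs
  · rw [map_one, Algebra.TensorProduct.one_def]
  · rw [map_zero, TensorProduct.tmul_zero]

theorem coeffDeriv_mul :
    coeffDeriv δ (X * Y) = coeffDeriv δ X * Y + X * coeffDeriv δ Y := by
  induction X using TensorProduct.induction_on with
  | zero => simp only [map_zero, zero_mul, add_zero]
  | add X₁ X₂ h₁ h₂ => simp only [map_add, add_mul, h₁, h₂]; abel
  | tmul r e =>
    induction Y using TensorProduct.induction_on with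
    | zero => simp only [map_zero, mul_zero, add_zero]
    | add Y₁ Y₂ h₁ h₂ => simp only [map_add, mul_add, h₁, h₂]; abel
    | tmul s f =>
      simp only [Algebra.TensorProduct.tmul_mul_tmul, coeffDeriv_tmul, Derivation.leibniz,
        smul_eq_mul, TensorProduct.add_tmul, mul_comm s, add_comm]

theorem coeffDeriv_smul : coeffDeriv δ (r • X) = δ r • X + r • coeffDeriv δ X := by
  induction X using TensorProduct.induction_on with
  | zero => simp only [smul_zero, map_zero, add_zero]
  | tmul s e =>
    simp only [TensorProduct.smul_tmul', smul_eq_mul, coeffDeriv_tmul, Derivation.leibniz,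
      TensorProduct.add_tmul, mul_comm s, add_comm]
  | add X₁ X₂ h₁ h₂ => simp only [smul_add, map_add, h₁, h₂]; abel

theorem coeffDeriv_dx (k : Fin n) : coeffDeriv δ (dx k : AlgForm R n) = 0 := by
  rw [dx, coeffDeriv_tmul, Derivation.map_one_eq_zero, TensorProduct.zero_tmul]

theorem coeffDeriv_involute : coeffDeriv δ (involute X) = involute (coeffDeriv δ X) := by
  induction X using TensorProduct.induction_on with
  | zero => simp only [map_zero]
  | tmul r e => simp only [coeffDeriv_tmul, involute_tmul]
  | add X₁ X₂ h₁ h₂ => simp only [map_add, h₁, h₂]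

theorem coeffDeriv_contract : coeffDeriv δ (contract m X) = contract m (coeffDeriv δ X) := by
  induction X using TensorProduct.induction_on with
  | zero => simp only [map_zero]
  | tmul r e => simp only [coeffDeriv_tmul, contract_tmul]
  | add X₁ X₂ h₁ h₂ => simp only [map_add, h₁, h₂]

theorem coeffDeriv_comm {δ ε : Derivation ℝ R R} (h : ∀ r, δ (ε r) = ε (δ r)) :
    coeffDeriv δ (coeffDeriv ε X) = coeffDeriv ε (coeffDeriv δ X) := by
  induction X using TensorProduct.induction_on with
  | zero => simp only [map_zero]
  | tmul r e => simp only [coeffDeriv_tmul, h]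
  | add X₁ X₂ h₁ h₂ => simp only [map_add, h₁, h₂]

end Operations

section OneForm

variable (g h : Fin n → R) (X : AlgForm R n)

theorem oneForm_apply : oneForm g = ∑ k, g k • dx k :=
  Fintype.linearCombination_apply R dx g

theorem involute_oneForm : involute (oneForm g) = -oneForm g := by
  simp only [oneForm_apply, map_sum, map_smul, involute_dx, smul_neg, Finset.sum_neg_distrib]

theorem oneForm_mul : oneForm g * X = involute X * oneForm g := by
  simp only [oneForm_apply, Finset.sum_mul, Finset.mul_sum, smul_mul_assoc, mul_smul_comm, dx_mul]

theorem mul_oneForm : X * oneForm g = oneForm g * involute X := by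
  rw [oneForm_mul, involute_involute]

theorem dx_eq_oneForm (k : Fin n) : dx k = oneForm (R := R) (Pi.single k 1) := by
  rw [oneForm, Fintype.linearCombination_apply_single, one_smul]

theorem coeffDeriv_oneForm (δ : Derivation ℝ R R) :
    coeffDeriv δ (oneForm g) = oneForm fun j => δ (g j) := by
  simp only [oneForm_apply, map_sum, coeffDeriv_smul, coeffDeriv_dx, smul_zero, add_zero]

end OneForm

section ExteriorDerivative

variable (D : Fin n → Derivation ℝ R R) (X Y : AlgForm R n) (r : R)

theorem d_apply : d D X = ∑ k, dx k * coeffDeriv (D k) X := by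
  simp only [d, LinearMap.sum_apply, LinearMap.comp_apply, LinearMap.mulLeft_apply]

theorem involute_d : involute (d D X) = -d D (involute X) := by
  simp only [d_apply, map_sum, map_mul, involute_dx, neg_mul, coeffDeriv_involute,
    Finset.sum_neg_distrib]

theorem d_mul : d D (X * Y) = d D X * Y + involute X * d D Y := by
  have dx_mul_mul (k : Fin n) : dx k * (X * coeffDeriv (D k) Y) =
      involute X * (dx k * coeffDeriv (D k) Y) := by
    rw [← mul_assoc, dx_mul, mul_assoc]
  simp only [d_apply, coeffDeriv_mul, mul_add, Finset.sum_add_distrib, Finset.sum_mul,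
    Finset.mul_sum, dx_mul_mul, mul_assoc]

theorem d_smul : d D (r • X) = oneForm (fun k => D k r) * X + r • d D X := by
  simp only [d_apply, oneForm_apply, coeffDeriv_smul, mul_add, Finset.sum_add_distrib,
    Finset.sum_mul, Finset.smul_sum, mul_smul_comm, smul_mul_assoc]

theorem d_one : d D (1 : AlgForm R n) = 0 := by
  simp only [d_apply, Algebra.TensorProduct.one_def, coeffDeriv_tmul, Derivation.map_one_eq_zero,
    TensorProduct.zero_tmul, mul_zero, Finset.sum_const_zero]

theorem d_d (hD : ∀ i j r, D i (D j r) = D j (D i r)) : d D (d D X) = 0 := by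
  have swap : d D (d D X) = -d D (d D X) := by
    conv_rhs => rw [d_apply]
    conv_lhs => rw [d_apply]
    simp only [d_apply, map_sum, coeffDeriv_mul, coeffDeriv_dx, zero_mul, zero_add, Finset.mul_sum,
      ← mul_assoc, ← Finset.sum_neg_distrib]
    rw [Finset.sum_comm]
    refine Finset.sum_congr rfl fun i _ => Finset.sum_congr rfl fun j _ => ?_
    rw [dx_mul, involute_dx, coeffDeriv_comm X (hD j i), neg_mul, neg_mul]
  have two_smul_eq_zero : (2 : ℝ) • d D (d D X) = 0 := by
    rw [two_smul]; nth_rw 1 [swap]; exact neg_add_cancel _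
  exact (smul_eq_zero_iff_right two_ne_zero).mp two_smul_eq_zero

theorem d_contract (m : Fin n) :
    d D (contract m X) = coeffDeriv (D m) X - contract m (d D X) := by
  simp only [d_apply, map_sum, contract_mul, contract_dx, involute_dx, coeffDeriv_contract, ite_mul,
    one_mul, zero_mul, neg_mul, Finset.sum_add_distrib, Finset.sum_neg_distrib, Finset.sum_ite_eq,
    Finset.mem_univ, if_true]
  abel

end ExteriorDerivative

section EvenCenter

/-- The even central forms, which can be moved freely across products and signs. -/
noncomputable def evenCenter (R : Type*) [CommRing R] [Algebra ℝ R] (n : ℕ) :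
    Subalgebra R (AlgForm R n) :=
  Subalgebra.center R (AlgForm R n) ⊓ AlgHom.equalizer involute (AlgHom.id R (AlgForm R n))

variable {S : AlgForm R n}

theorem mul_comm_of_mem_evenCenter (hS : S ∈ evenCenter R n) (X : AlgForm R n) : S * X = X * S :=
  ((Subalgebra.mem_center_iff.mp hS.1) X).symm

theorem involute_of_mem_evenCenter (hS : S ∈ evenCenter R n) : involute S = S :=
  hS.2

theorem oneForm_mul_oneForm_mem_evenCenter (g h : Fin n → R) :
    oneForm g * oneForm h ∈ evenCenter R n := by
  refine ⟨Subalgebra.mem_center_iff.mpr fun X => ?_, ?_⟩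
  · calc X * (oneForm g * oneForm h) = oneForm g * involute X * oneForm h := by
          rw [← mul_assoc, mul_oneForm g]
      _ = oneForm g * oneForm h * X := by
          rw [mul_assoc, mul_oneForm h, involute_involute, mul_assoc]
  · change involute _ = _
    rw [map_mul, involute_oneForm, involute_oneForm, neg_mul_neg]
    rfl

theorem d_oneForm_mem_evenCenter (D : Fin n → Derivation ℝ R R) (g : Fin n → R) :
    d D (oneForm g) ∈ evenCenter R n := by
  rw [d_apply]
  refine Subalgebra.sum_mem _ fun k _ => ?_
  rw [dx_eq_oneForm, coeffDeriv_oneForm]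
  exact oneForm_mul_oneForm_mem_evenCenter _ _

end EvenCenter

section Connection

open Matrix

variable (D : Fin n → Derivation ℝ R R) (Γ : Fin n → Fin n → Fin n → R)

/-- The matrix of one-forms `A^m_i = Γ^m_{ia} dx^a`. Since `∇` differentiates along the first lower
index, these are the forms of the connection with opposite torsion, whose symbols are those of `Γ`
with the lower indices exchanged. -/
noncomputable def conn : Matrix (Fin n) (Fin n) (AlgForm R n) :=
  of fun m i => oneForm (Γ m i)

/-- The matrix of curvature two-forms `Θ = dA + A ∧ A` of the connection with forms `conn Γ`. -/
noncomputable def curv : Matrix (Fin n) (Fin n) (AlgForm R n) :=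
  (conn Γ).map (d D) + conn Γ * conn Γ

/-- The covariant derivative `∇_i` of forms, for the connection with Christoffel symbols `Γ`. -/
noncomputable def covDeriv (i : Fin n) (X : AlgForm R n) : AlgForm R n :=
  coeffDeriv (D i) X - ∑ m, conn Γ m i * contract m X

/-- The exterior covariant derivative of a family of forms with one lower index. -/
noncomputable def extCovDeriv (F : Fin n → AlgForm R n) (i : Fin n) : AlgForm R n :=
  d D (F i) - ∑ m, conn Γ m i * F m

/-- A matrix `S^{ij}` of even central forms is parallel if its exterior covariant derivative, as a
tensor with two upper indices, vanishes. -/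
structure IsParallel (S : Matrix (Fin n) (Fin n) (AlgForm R n)) : Prop where
  mem_evenCenter : ∀ i j, S i j ∈ evenCenter R n
  map_d : S.map (d D) = -(conn Γ * S + S * (conn Γ)ᵀ)

/-- The contraction `S^{ij} ∧ F_i ∧ G_j`. -/
noncomputable def pairing (S : Matrix (Fin n) (Fin n) (AlgForm R n))
    (F G : Fin n → AlgForm R n) : AlgForm R n :=
  ∑ i, ∑ j, S i j * F i * G j

section Matrix

variable {D Γ} {S T : Matrix (Fin n) (Fin n) (AlgForm R n)}

theorem map_d_mul : (S * T).map (d D) = S.map (d D) * T + S.map involute * T.map (d D) := by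
  ext i j
  simp only [map_apply, mul_apply, Matrix.add_apply, map_sum, d_mul, Finset.sum_add_distrib]

theorem conn_map_involute : (conn Γ).map involute = -conn Γ := by
  ext i j
  exact involute_oneForm _

theorem transpose_conn_mul_conn : (conn Γ * conn Γ)ᵀ = -((conn Γ)ᵀ * (conn Γ)ᵀ) := by
  ext i j
  simp only [transpose_apply, mul_apply, Matrix.neg_apply, ← Finset.sum_neg_distrib]
  refine Finset.sum_congr rfl fun k _ => ?_
  rw [conn, of_apply, of_apply, oneForm_mul, involute_oneForm, neg_mul]

theorem transpose_mul_of_commute (h : ∀ i k j, Commute (S i k) (T k j)) :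
    (S * T)ᵀ = Tᵀ * Sᵀ := by
  ext i j
  simp only [transpose_apply, mul_apply, (h _ _ _).eq]

theorem map_involute_of_mem_evenCenter (hS : ∀ i j, S i j ∈ evenCenter R n) :
    S.map involute = S := by
  ext i j
  exact involute_of_mem_evenCenter (hS i j)

theorem curv_mem_evenCenter (i j : Fin n) : curv D Γ i j ∈ evenCenter R n :=
  add_mem (d_oneForm_mem_evenCenter D _)
    (by
      rw [mul_apply]
      exact Subalgebra.sum_mem _ fun _ _ => oneForm_mul_oneForm_mem_evenCenter _ _)

theorem map_d_map_d (hD : ∀ i j r, D i (D j r) = D j (D i r)) :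
    (S.map (d D)).map (d D) = 0 := by
  ext i j
  exact d_d D _ hD

theorem bianchi (hD : ∀ i j r, D i (D j r) = D j (D i r)) :
    (curv D Γ).map (d D) = curv D Γ * conn Γ - conn Γ * curv D Γ := by
  rw [curv, Matrix.map_add _ (map_add _), map_d_map_d hD, map_d_mul, conn_map_involute]
  noncomm_ring

theorem IsParallel.curv_mul (hD : ∀ i j r, D i (D j r) = D j (D i r)) (hS : IsParallel D Γ S) :
    curv D Γ * S = -(S * (curv D Γ)ᵀ) := by
  have dd := map_d_map_d (S := S) hD
  rw [hS.map_d, Matrix.map_neg _ (map_neg _), Matrix.map_add _ (map_add _), map_d_mul, map_d_mul,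
    conn_map_involute, map_involute_of_mem_evenCenter hS.mem_evenCenter, hS.map_d] at dd
  rw [eq_neg_iff_add_eq_zero, ← neg_eq_zero, ← dd, curv, transpose_add, transpose_conn_mul_conn,
    transpose_map]
  noncomm_ring

end Matrix

section Pairing

variable {D Γ} {S : Matrix (Fin n) (Fin n) (AlgForm R n)} (F G : Fin n → AlgForm R n)

theorem IsParallel.sum_d_mul (hS : IsParallel D Γ S) (Z : Fin n → Fin n → AlgForm R n) :
    ∑ i, ∑ j, d D (S i j) * Z i j =
      -∑ i, ∑ j, S i j * (∑ m, conn Γ m i * Z m j + ∑ m, conn Γ m j * Z i m) := by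
  have d_entry (i j : Fin n) :
      d D (S i j) = -(∑ k, S k j * conn Γ i k + ∑ k, S i k * conn Γ j k) := by
    simpa only [map_apply, Matrix.neg_apply, Matrix.add_apply, mul_apply, transpose_apply,
      mul_comm_of_mem_evenCenter (hS.mem_evenCenter _ j)] using congr_fun₂ hS.map_d i j
  simp only [d_entry, neg_mul, add_mul, mul_add, Finset.sum_neg_distrib, Finset.sum_add_distrib,
    Finset.sum_mul, Finset.mul_sum, mul_assoc]
  congr 2
  · rw [Finset.sum_comm_cycle]
    exact Finset.sum_congr rfl fun k _ => Finset.sum_comm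
  · exact Finset.sum_congr rfl fun i _ => Finset.sum_comm

theorem IsParallel.d_pairing (hS : IsParallel D Γ S) :
    d D (pairing S F G) = pairing S (extCovDeriv D Γ F) G +
      pairing S (fun i => involute (F i)) (extCovDeriv D Γ G) := by
  have d_term (i j : Fin n) : d D (S i j * F i * G j) = d D (S i j) * (F i * G j) +
      (S i j * d D (F i) * G j + S i j * involute (F i) * d D (G j)) := by
    rw [d_mul, d_mul, map_mul, involute_of_mem_evenCenter (hS.mem_evenCenter i j)]
    noncomm_ring
  have conn_mul_mul (m i j : Fin n) :
      conn Γ m j * (F i * G m) = involute (F i) * (conn Γ m j * G m) := by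
    rw [← mul_assoc, conn, of_apply, oneForm_mul, mul_assoc]
  simp only [pairing, map_sum, d_term, Finset.sum_add_distrib, hS.sum_d_mul]
  simp only [extCovDeriv, mul_add, mul_sub, sub_mul, Finset.sum_add_distrib,
    Finset.sum_sub_distrib, conn_mul_mul, Finset.mul_sum, Finset.sum_mul, mul_assoc]
  abel

theorem pairing_mul_mul_cocycle (hS : ∀ i j, S i j ∈ evenCenter R n)
    {f g : Fin n → AlgForm R n → AlgForm R n} {τ : AlgForm R n → AlgForm R n}
    (hf : ∀ i X Y, f i (X * Y) = f i X * τ Y + X * f i Y)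
    (hg : ∀ i X Y, g i (X * Y) = g i X * Y + τ X * g i Y) (X Y Z : AlgForm R n) :
    pairing S (f · (X * Y)) (g · Z) + pairing S (f · X) (g · Y) * Z =
      pairing S (f · X) (g · (Y * Z)) + X * pairing S (f · Y) (g · Z) := by
  have move_left (i j : Fin n) : X * (S i j * f i Y * g j Z) = S i j * X * f i Y * g j Z := by
    rw [mul_comm_of_mem_evenCenter (hS i j) X]
    simp only [mul_assoc]
  simp only [pairing, hf, hg, Finset.mul_sum, Finset.sum_mul, move_left, ← Finset.sum_add_distrib]
  refine Finset.sum_congr rfl fun i _ => Finset.sum_congr rfl fun j _ => ?_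
  noncomm_ring

theorem pairing_transpose_mulVec_left {A : Matrix (Fin n) (Fin n) (AlgForm R n)}
    (hA : ∀ i j, A i j ∈ evenCenter R n) :
    pairing S (Aᵀ *ᵥ F) G = pairing (A * S) F G := by
  simp only [pairing, mulVec, dotProduct, transpose_apply, mul_apply, Finset.mul_sum,
    Finset.sum_mul, ← mul_assoc, mul_comm_of_mem_evenCenter (hA _ _) (S _ _)]
  rw [Finset.sum_comm_cycle]
  exact Finset.sum_congr rfl fun k _ => Finset.sum_comm

theorem pairing_transpose_mulVec_right {A : Matrix (Fin n) (Fin n) (AlgForm R n)}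
    (hA : ∀ i j, A i j ∈ evenCenter R n) :
    pairing S F (Aᵀ *ᵥ G) = pairing (S * Aᵀ) F G := by
  simp only [pairing, mulVec, dotProduct, transpose_apply, mul_apply, Finset.mul_sum,
    Finset.sum_mul, mul_assoc, mul_comm_of_mem_evenCenter (hA _ _) (F _ * _),
    mul_comm_of_mem_evenCenter (hA _ _) (G _)]
  exact Finset.sum_congr rfl fun i _ => Finset.sum_comm

theorem pairing_sub_left (F' : Fin n → AlgForm R n) :
    pairing S (F - F') G = pairing S F G - pairing S F' G := by
  simp only [pairing, Pi.sub_apply, mul_sub, sub_mul, Finset.sum_sub_distrib]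

theorem pairing_sub_right (G' : Fin n → AlgForm R n) :
    pairing S F (G - G') = pairing S F G - pairing S F G' := by
  simp only [pairing, Pi.sub_apply, mul_sub, Finset.sum_sub_distrib]

theorem pairing_neg_left : pairing S (-F) G = -pairing S F G := by
  simp only [pairing, Pi.neg_apply, mul_neg, neg_mul, Finset.sum_neg_distrib]

theorem pairing_smul (c : ℝ) : pairing (c • S) F G = c • pairing S F G := by
  simp only [pairing, Matrix.smul_apply, smul_mul_assoc, Finset.smul_sum]

theorem pairing_smul_left (c : ℝ) :
    pairing S (fun i => c • F i) G = c • pairing S F G := by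
  simp only [pairing, mul_smul_comm, smul_mul_assoc, Finset.smul_sum]

end Pairing

section CovariantDerivative

variable (X Y : AlgForm R n)

theorem covDeriv_mul (i : Fin n) :
    covDeriv D Γ i (X * Y) = covDeriv D Γ i X * Y + X * covDeriv D Γ i Y := by
  have conn_mul_contract (m : Fin n) : conn Γ m i * (involute X * contract m Y) =
      X * (conn Γ m i * contract m Y) := by
    rw [← mul_assoc, conn, of_apply, ← mul_oneForm, mul_assoc]
  simp only [covDeriv, coeffDeriv_mul, contract_mul, mul_add, mul_sub, sub_mul, Finset.mul_sum,
    Finset.sum_mul, Finset.sum_add_distrib, conn_mul_contract, mul_assoc]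
  abel

theorem covDeriv_involute (i : Fin n) :
    covDeriv D Γ i (involute X) = involute (covDeriv D Γ i X) := by
  simp only [covDeriv, coeffDeriv_involute, contract_involute, map_sub, map_sum, map_mul, conn,
    of_apply, involute_oneForm, neg_mul, mul_neg]

theorem covDeriv_const_smul (c : ℝ) (i : Fin n) :
    covDeriv D Γ i (c • X) = c • covDeriv D Γ i X := by
  simp only [covDeriv, map_smul, LinearMap.map_smul_of_tower, mul_smul_comm, smul_sub,
    Finset.smul_sum]

theorem extCovDeriv_contract :
    extCovDeriv D Γ (contract · X) =
      (covDeriv D Γ · X) - (contract · (d D X)) := by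
  ext1 i
  simp only [extCovDeriv, Pi.sub_apply, covDeriv, d_contract]
  abel

theorem extCovDeriv_involute_contract :
    extCovDeriv D Γ (fun i => involute (contract i X)) =
      (fun i => involute (contract i (d D X))) - (covDeriv D Γ · (involute X)) := by
  ext1 i
  have h := congr_arg involute (congr_fun (extCovDeriv_contract D Γ X) i)
  simp only [extCovDeriv, Pi.sub_apply, map_sub, map_sum, map_mul, involute_d, conn, of_apply,
    involute_oneForm, neg_mul, Finset.sum_neg_distrib] at h ⊢
  rw [covDeriv_involute, ← neg_sub (involute _), ← h]
  abel

theorem d_coeffDeriv (hD : ∀ i j r, D i (D j r) = D j (D i r)) (i : Fin n) :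
    d D (coeffDeriv (D i) X) = coeffDeriv (D i) (d D X) := by
  simp only [d_apply, map_sum, coeffDeriv_mul, coeffDeriv_dx, zero_mul, zero_add,
    coeffDeriv_comm X (hD _ i)]

theorem extCovDeriv_covDeriv (hD : ∀ i j r, D i (D j r) = D j (D i r)) :
    extCovDeriv D Γ (covDeriv D Γ · X) =
      (covDeriv D Γ · (d D X)) - (curv D Γ)ᵀ *ᵥ (contract · X) := by
  have d_conn_mul (m i : Fin n) : d D (conn Γ m i * contract m X) =
      d D (conn Γ m i) * contract m X
        - conn Γ m i * (coeffDeriv (D m) X - contract m (d D X)) := by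
    rw [d_mul, d_contract, conn, of_apply, involute_oneForm, neg_mul, ← sub_eq_add_neg]
  ext1 i
  have conn_mul_conn : ∑ m, ∑ l, conn Γ m l * conn Γ l i * contract m X =
      -∑ l, conn Γ l i * ∑ m, conn Γ m l * contract m X := by
    rw [Finset.sum_comm]
    simp only [Finset.mul_sum, ← Finset.sum_neg_distrib, ← mul_assoc, ← neg_mul]
    refine Finset.sum_congr rfl fun l _ => Finset.sum_congr rfl fun m _ => ?_
    rw [conn, of_apply, of_apply, oneForm_mul, involute_oneForm]
  simp only [extCovDeriv, Pi.sub_apply, mulVec, dotProduct, transpose_apply, curv,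
    Matrix.add_apply, map_apply, mul_apply, add_mul, Finset.sum_mul, Finset.sum_add_distrib,
    conn_mul_conn]
  simp only [covDeriv, map_sub, map_sum, d_coeffDeriv D X hD, d_conn_mul, mul_sub,
    Finset.sum_sub_distrib]
  abel

end CovariantDerivative

section QuantumCorrection

variable (ω : Fin n → Fin n → R)

/-- The bivector `ω^{ij}` as a matrix of `0`-forms. -/
noncomputable def bivector : Matrix (Fin n) (Fin n) (AlgForm R n) :=
  (of ω).map (algebraMap R (AlgForm R n))

/-- The matrix of two-forms `H^{ij} = -½ ω^{is} Θ^j_s`. -/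
noncomputable def hMatrix : Matrix (Fin n) (Fin n) (AlgForm R n) :=
  (-2⁻¹ : ℝ) • (bivector ω * (curv D Γ)ᵀ)

/-- The order-`λ` part `½ ω^{ij} ∇_i X ∧ ∇_j Y + (-1)^{|X|+1} H^{ij} ∧ (∂_i ⌟ X) ∧ (∂_j ⌟ Y)` of
the quantum product. The sign is absorbed by the grade involution, applied after `∂_i ⌟`. -/
noncomputable def quantumCorr (X Y : AlgForm R n) : AlgForm R n :=
  (2⁻¹ : ℝ) • pairing (bivector ω) (covDeriv D Γ · X) (covDeriv D Γ · Y) +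
    pairing (hMatrix D Γ ω) (fun i => involute (contract i X)) (contract · Y)

variable {D Γ ω}

theorem pairing_bivector (F G : Fin n → AlgForm R n) :
    pairing (bivector ω) F G = ∑ i, ∑ j, ω i j • (F i * G j) := by
  simp only [pairing, bivector, map_apply, of_apply, Algebra.smul_def, mul_assoc]

theorem hMatrix_apply (i j : Fin n) :
    hMatrix D Γ ω i j = (-2⁻¹ : ℝ) • ∑ s, ω i s • curv D Γ j s := by
  simp only [hMatrix, Matrix.smul_apply, mul_apply, bivector, map_apply, of_apply, transpose_apply,
    Algebra.smul_def (A := AlgForm R n) (R := R)]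

theorem bivector_mem_evenCenter (i j : Fin n) : bivector ω i j ∈ evenCenter R n :=
  Subalgebra.algebraMap_mem _ _

theorem hMatrix_mem_evenCenter (i j : Fin n) : hMatrix D Γ ω i j ∈ evenCenter R n := by
  rw [hMatrix, Matrix.smul_apply, mul_apply, ← algebraMap_smul R]
  exact Subalgebra.smul_mem _ (Subalgebra.sum_mem _ fun k _ =>
    mul_mem (bivector_mem_evenCenter i k) (curv_mem_evenCenter j k)) _

theorem isParallel_bivector
    (hω : ∀ i j m, D m (ω i j) + ∑ k, ω k j * Γ i k m + ∑ k, ω i k * Γ j k m = 0) :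
    IsParallel D Γ (bivector ω) where
  mem_evenCenter := bivector_mem_evenCenter
  map_d := by
    have D_ω (i j : Fin n) : (fun m => D m (ω i j)) =
        -(∑ k, ω k j • Γ i k + ∑ k, ω i k • Γ j k) := by
      ext m
      simpa only [eq_neg_iff_add_eq_zero, add_assoc, Pi.neg_apply, Pi.add_apply, Finset.sum_apply,
        Pi.smul_apply, smul_eq_mul] using hω i j m
    ext i j
    simp only [map_apply, bivector, of_apply, Algebra.algebraMap_eq_smul_one, d_smul, D_ω, d_one,
      smul_zero, add_zero, mul_one, map_neg, map_add, map_sum, map_smul, Matrix.neg_apply,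
      Matrix.add_apply, mul_apply, transpose_apply, conn, mul_smul_comm, smul_mul_assoc, one_mul]

theorem hMatrix_eq_curv_mul (hD : ∀ i j r, D i (D j r) = D j (D i r))
    (hω : IsParallel D Γ (bivector ω)) :
    hMatrix D Γ ω = (2⁻¹ : ℝ) • (curv D Γ * bivector ω) := by
  rw [hMatrix, hω.curv_mul hD, smul_neg, neg_smul]

theorem IsParallel.hMatrix (hD : ∀ i j r, D i (D j r) = D j (D i r))
    (hω : IsParallel D Γ (bivector ω)) : IsParallel D Γ (hMatrix D Γ ω) where
  mem_evenCenter := hMatrix_mem_evenCenter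
  map_d := by
    have d_transpose_curv : (curv D Γ)ᵀ.map (d D) =
        (conn Γ)ᵀ * (curv D Γ)ᵀ - (curv D Γ)ᵀ * (conn Γ)ᵀ := by
      rw [transpose_map, bianchi hD, transpose_sub,
        transpose_mul_of_commute fun i k _ =>
          mul_comm_of_mem_evenCenter (curv_mem_evenCenter i k) _,
        transpose_mul_of_commute fun _ k j =>
          (mul_comm_of_mem_evenCenter (curv_mem_evenCenter k j) _).symm]
    rw [AlgForm.hMatrix, Matrix.map_smul _ _ (map_smul _ _), map_d_mul, hω.map_d, d_transpose_curv,
      map_involute_of_mem_evenCenter hω.mem_evenCenter, Matrix.mul_smul, Matrix.smul_mul,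
      ← smul_add, ← smul_neg]
    congr 1
    noncomm_ring

theorem quantumCorr_cocycle (X Y Z : AlgForm R n) :
    quantumCorr D Γ ω (X * Y) Z + quantumCorr D Γ ω X Y * Z =
      quantumCorr D Γ ω X (Y * Z) + X * quantumCorr D Γ ω Y Z := by
  have poisson := pairing_mul_mul_cocycle (bivector_mem_evenCenter (ω := ω)) (τ := id)
    (fun i X Y => covDeriv_mul D Γ X Y i) (fun i X Y => covDeriv_mul D Γ X Y i) X Y Z
  have curvature := pairing_mul_mul_cocycle (hMatrix_mem_evenCenter (D := D) (Γ := Γ) (ω := ω))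
    (f := fun i X => involute (contract i X)) (τ := involute)
    (fun i X Y => by rw [contract_mul, map_add, map_mul, map_mul, involute_involute])
    (fun i X Y => contract_mul X Y i) X Y Z
  simp only [quantumCorr, add_mul, mul_add, smul_mul_assoc, mul_smul_comm]
  linear_combination (norm := module) (2⁻¹ : ℝ) • poisson + curvature

theorem d_pairing_covDeriv (hD : ∀ i j r, D i (D j r) = D j (D i r))
    (hω : IsParallel D Γ (bivector ω)) (X Y : AlgForm R n) :
    d D ((2⁻¹ : ℝ) • pairing (bivector ω) (covDeriv D Γ · X) (covDeriv D Γ · Y)) =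
      (2⁻¹ : ℝ) • pairing (bivector ω) (covDeriv D Γ · (d D X)) (covDeriv D Γ · Y)
      + (2⁻¹ : ℝ) • pairing (bivector ω) (covDeriv D Γ · (involute X)) (covDeriv D Γ · (d D Y))
      - pairing (hMatrix D Γ ω) (contract · X) (covDeriv D Γ · Y)
      + pairing (hMatrix D Γ ω) (covDeriv D Γ · (involute X)) (contract · Y) := by
  have curv_left : (2⁻¹ : ℝ) • pairing (bivector ω) ((curv D Γ)ᵀ *ᵥ (contract · X))
      (covDeriv D Γ · Y) = pairing (hMatrix D Γ ω) (contract · X) (covDeriv D Γ · Y) := by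
    rw [pairing_transpose_mulVec_left _ _ curv_mem_evenCenter, ← pairing_smul,
      hMatrix_eq_curv_mul hD hω]
  have curv_right : (2⁻¹ : ℝ) • pairing (bivector ω) (covDeriv D Γ · (involute X))
      ((curv D Γ)ᵀ *ᵥ (contract · Y)) =
      -pairing (hMatrix D Γ ω) (covDeriv D Γ · (involute X)) (contract · Y) := by
    rw [pairing_transpose_mulVec_right _ _ curv_mem_evenCenter, hMatrix, pairing_smul, neg_smul,
      neg_neg]
  rw [map_smul, hω.d_pairing, extCovDeriv_covDeriv D Γ X hD, extCovDeriv_covDeriv D Γ Y hD]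
  simp only [← covDeriv_involute, pairing_sub_left, pairing_sub_right, smul_add, smul_sub,
    curv_left, curv_right]
  abel

theorem d_pairing_contract (hH : IsParallel D Γ (hMatrix D Γ ω)) (X Y : AlgForm R n) :
    d D (pairing (hMatrix D Γ ω) (fun i => involute (contract i X)) (contract · Y)) =
      pairing (hMatrix D Γ ω) (fun i => involute (contract i (d D X))) (contract · Y)
      + pairing (hMatrix D Γ ω) (fun i => involute (contract i (involute X))) (contract · (d D Y))
      + pairing (hMatrix D Γ ω) (contract · X) (covDeriv D Γ · Y)
      - pairing (hMatrix D Γ ω) (covDeriv D Γ · (involute X)) (contract · Y) := by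
  have involute_contract_involute :
      (fun i => involute (contract i (involute X))) = -(contract · X) := by
    ext1 i
    rw [contract_involute, map_neg, involute_involute, Pi.neg_apply]
  rw [hH.d_pairing, extCovDeriv_involute_contract, extCovDeriv_contract,
    involute_contract_involute, pairing_neg_left]
  simp only [pairing_sub_left, pairing_sub_right, involute_involute]
  abel

theorem d_quantumCorr (hD : ∀ i j r, D i (D j r) = D j (D i r))
    (hω : IsParallel D Γ (bivector ω)) (X Y : AlgForm R n) :
    d D (quantumCorr D Γ ω X Y) =
      quantumCorr D Γ ω (d D X) Y + quantumCorr D Γ ω (involute X) (d D Y) := by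
  rw [quantumCorr, map_add, d_pairing_covDeriv hD hω, d_pairing_contract (hω.hMatrix hD),
    quantumCorr, quantumCorr]
  abel

end QuantumCorrection

section QuantumProduct

variable {D Γ} {ω : Fin n → Fin n → R}

theorem quantumCorr_smul_left (c : ℝ) (X Y : AlgForm R n) :
    quantumCorr D Γ ω (c • X) Y = c • quantumCorr D Γ ω X Y := by
  simp only [quantumCorr, covDeriv_const_smul, LinearMap.map_smul_of_tower,
    ← AlgHom.coe_toLinearMap, pairing_smul_left, smul_add, smul_comm c]

variable (D Γ ω)

/-- The quantum product of `X.1 + λ X.2` and `Y.1 + λ Y.2`, where `λ² = 0`. -/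
noncomputable def quantumMul (X Y : AlgForm R n × AlgForm R n) : AlgForm R n × AlgForm R n :=
  (X.1 * Y.1, X.1 * Y.2 + X.2 * Y.1 + quantumCorr D Γ ω X.1 Y.1)

variable {D Γ ω}

theorem quantumMul_smul_left (c : ℝ) (X Y : AlgForm R n × AlgForm R n) :
    quantumMul D Γ ω (c • X) Y = c • quantumMul D Γ ω X Y := by
  ext1 <;> simp only [quantumMul, Prod.smul_fst, Prod.smul_snd, smul_mul_assoc, smul_add,
    quantumCorr_smul_left]

theorem quantumMul_assoc (X Y Z : AlgForm R n × AlgForm R n) :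
    quantumMul D Γ ω (quantumMul D Γ ω X Y) Z = quantumMul D Γ ω X (quantumMul D Γ ω Y Z) := by
  refine Prod.ext (mul_assoc _ _ _) ?_
  have cocycle := quantumCorr_cocycle (D := D) (Γ := Γ) (ω := ω) X.1 Y.1 Z.1
  simp only [quantumMul, mul_add, add_mul, mul_assoc]
  linear_combination (norm := abel) cocycle

theorem d_quantumMul (hD : ∀ i j r, D i (D j r) = D j (D i r))
    (hω : IsParallel D Γ (bivector ω)) (X Y : AlgForm R n × AlgForm R n) :
    (quantumMul D Γ ω X Y).map (d D) (d D) =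
      quantumMul D Γ ω (X.map (d D) (d D)) Y +
        quantumMul D Γ ω (X.map involute involute) (Y.map (d D) (d D)) := by
  refine Prod.ext (d_mul D _ _) ?_
  simp only [quantumMul, Prod.map_fst, Prod.map_snd, Prod.snd_add, map_add, d_mul,
    d_quantumCorr hD hω]
  abel

end QuantumProduct

end Connection

section Homogeneous

/-- The `p`-forms. -/
noncomputable def homogeneous (R : Type*) [CommRing R] [Algebra ℝ R] (n p : ℕ) :
    Submodule R (AlgForm R n) :=
  LinearMap.range (oneForm (R := R) (n := n)) ^ p

variable {p q : ℕ} {X Y : AlgForm R n}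

theorem homogeneous_induction {C : (p : ℕ) → AlgForm R n → Prop}
    (algebraMap : ∀ r, C 0 (algebraMap R _ r))
    (add : ∀ p X Y, C p X → C p Y → C p (X + Y))
    (oneForm_mul : ∀ p g X, X ∈ homogeneous R n p → C p X → C (p + 1) (oneForm g * X))
    (hX : X ∈ homogeneous R n p) : C p X :=
  Submodule.pow_induction_on_left' _ (C := fun p X _ => C p X) algebraMap
    (fun X Y p _ _ => add p X Y)
    (fun _ hm p X hX h => by obtain ⟨g, rfl⟩ := hm; exact oneForm_mul p g X hX h) hX

theorem algebraMap_mem_homogeneous (r : R) : algebraMap R _ r ∈ homogeneous R n 0 :=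
  Submodule.algebraMap_mem r

theorem mul_mem_homogeneous (hX : X ∈ homogeneous R n p) (hY : Y ∈ homogeneous R n q) :
    X * Y ∈ homogeneous R n (p + q) := by
  rw [homogeneous, pow_add]
  exact Submodule.mul_mem_mul hX hY

theorem oneForm_mem_homogeneous (g : Fin n → R) : oneForm g ∈ homogeneous R n 1 := by
  rw [homogeneous, pow_one]
  exact LinearMap.mem_range_self _ g

theorem oneForm_mul_mem_homogeneous (g : Fin n → R) (hX : X ∈ homogeneous R n p) :
    oneForm g * X ∈ homogeneous R n (p + 1) :=
  add_comm 1 p ▸ mul_mem_homogeneous (oneForm_mem_homogeneous g) hX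

theorem dx_mul_mem_homogeneous (k : Fin n) (hX : X ∈ homogeneous R n p) :
    dx k * X ∈ homogeneous R n (p + 1) :=
  dx_eq_oneForm (R := R) k ▸ oneForm_mul_mem_homogeneous _ hX

theorem contract_algebraMap (m : Fin n) (r : R) :
    contract m (algebraMap R (AlgForm R n) r) = 0 := by
  rw [Algebra.TensorProduct.algebraMap_apply, contract_tmul, CliffordAlgebra.contractLeft_one,
    TensorProduct.tmul_zero]

theorem contract_oneForm_mul (m : Fin n) (g : Fin n → R) :
    contract m (oneForm g * X) = g m • X - oneForm g * contract m X := by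
  have contract_oneForm : contract m (oneForm g) = algebraMap R (AlgForm R n) (g m) := by
    simp only [oneForm_apply, map_sum, map_smul, contract_dx, smul_ite, smul_zero,
      Finset.sum_ite_eq, Finset.mem_univ, if_true, Algebra.algebraMap_eq_smul_one]
  rw [contract_mul, contract_oneForm, involute_oneForm, neg_mul, ← sub_eq_add_neg,
    Algebra.smul_def]

theorem involute_of_mem_homogeneous (hX : X ∈ homogeneous R n p) :
    involute X = (-1 : ℝ) ^ p • X := by
  refine homogeneous_induction (C := fun p X => involute X = (-1 : ℝ) ^ p • X) (fun r => ?_)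
    (fun p X Y hX hY => ?_) (fun p g X _ h => ?_) hX
  · rw [AlgHom.commutes, pow_zero, one_smul]
  · rw [map_add, hX, hY, smul_add]
  · rw [map_mul, involute_oneForm, h, pow_succ, mul_neg_one, neg_smul, neg_mul, mul_smul_comm]

theorem involute_contract_of_mem_homogeneous (m : Fin n) (hX : X ∈ homogeneous R n p) :
    involute (contract m X) = (-1 : ℝ) ^ (p + 1) • contract m X := by
  rw [← neg_neg (involute _), ← contract_involute, involute_of_mem_homogeneous hX,
    LinearMap.map_smul_of_tower, pow_succ, mul_neg_one, neg_smul]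

theorem contract_of_mem_homogeneous_zero (m : Fin n) (hX : X ∈ homogeneous R n 0) :
    contract m X = 0 := by
  obtain ⟨r, rfl⟩ := Submodule.mem_one.mp (by rwa [homogeneous, pow_zero] at hX)
  exact contract_algebraMap m r

theorem contract_mem_homogeneous (m : Fin n) (hX : X ∈ homogeneous R n (p + 1)) :
    contract m X ∈ homogeneous R n p := by
  induction p generalizing X with
  | zero =>
    obtain ⟨g, rfl⟩ := by rwa [homogeneous, zero_add, pow_one] at hX
    rw [← mul_one (oneForm g), contract_oneForm_mul, ← map_one (algebraMap R _),
      contract_algebraMap, mul_zero, sub_zero]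
    exact Submodule.smul_mem _ _ (algebraMap_mem_homogeneous 1)
  | succ p ih =>
    rw [homogeneous, pow_succ'] at hX
    refine Submodule.mul_induction_on hX ?_ fun X Y hX hY => ?_
    · rintro _ ⟨g, rfl⟩ X hX
      rw [contract_oneForm_mul]
      exact sub_mem (Submodule.smul_mem _ _ hX) (oneForm_mul_mem_homogeneous g (ih hX))
    · rw [map_add]
      exact add_mem hX hY

theorem coeffDeriv_mem_homogeneous (δ : Derivation ℝ R R) (hX : X ∈ homogeneous R n p) :
    coeffDeriv δ X ∈ homogeneous R n p := by
  refine homogeneous_induction (C := fun p X => coeffDeriv δ X ∈ homogeneous R n p) (fun r => ?_)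
    (fun p X Y hX hY => ?_) (fun p g X hX h => ?_) hX
  · rw [Algebra.TensorProduct.algebraMap_apply, coeffDeriv_tmul]
    exact algebraMap_mem_homogeneous (δ r)
  · rw [map_add]
    exact add_mem hX hY
  · rw [coeffDeriv_mul, coeffDeriv_oneForm]
    exact add_mem (oneForm_mul_mem_homogeneous _ hX) (oneForm_mul_mem_homogeneous _ h)

theorem d_mem_homogeneous (D : Fin n → Derivation ℝ R R) (hX : X ∈ homogeneous R n p) :
    d D X ∈ homogeneous R n (p + 1) := by
  rw [d_apply]
  exact sum_mem fun k _ => dx_mul_mem_homogeneous k (coeffDeriv_mem_homogeneous _ hX)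

theorem oneForm_mul_contract_mem_homogeneous (g : Fin n → R) (m : Fin n)
    (hX : X ∈ homogeneous R n p) : oneForm g * contract m X ∈ homogeneous R n p := by
  cases p with
  | zero => simp only [contract_of_mem_homogeneous_zero m hX, mul_zero, zero_mem]
  | succ p => exact oneForm_mul_mem_homogeneous g (contract_mem_homogeneous m hX)

theorem covDeriv_mem_homogeneous (D : Fin n → Derivation ℝ R R) (Γ : Fin n → Fin n → Fin n → R)
    (i : Fin n) (hX : X ∈ homogeneous R n p) : covDeriv D Γ i X ∈ homogeneous R n p :=
  sub_mem (coeffDeriv_mem_homogeneous _ hX)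
    (sum_mem fun m _ => oneForm_mul_contract_mem_homogeneous _ m hX)

theorem sum_dx_mul_contract (hX : X ∈ homogeneous R n p) :
    ∑ m, dx m * contract m X = (p : ℝ) • X := by
  refine homogeneous_induction (C := fun p X => ∑ m, dx m * contract m X = (p : ℝ) • X)
    (fun r => ?_) (fun p X Y hX hY => ?_) (fun p g X _ h => ?_) hX
  · simp only [contract_algebraMap, mul_zero, Finset.sum_const_zero, Nat.cast_zero, zero_smul]
  · simp only [map_add, mul_add, Finset.sum_add_distrib, hX, hY, smul_add]
  · have dx_mul_oneForm_mul (m : Fin n) : dx m * (oneForm g * contract m X) =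
        -(oneForm g * (dx m * contract m X)) := by
      rw [← mul_assoc, dx_mul, involute_oneForm, neg_mul, neg_mul, mul_assoc]
    simp only [contract_oneForm_mul, mul_sub, dx_mul_oneForm_mul, sub_neg_eq_add,
      Finset.sum_add_distrib, ← Finset.mul_sum, h, mul_smul_comm, ← smul_mul_assoc,
      ← Finset.sum_mul, ← oneForm_apply]
    rw [Nat.cast_succ, add_smul, one_smul, add_comm, add_mul, smul_mul_assoc]

end Homogeneous

section Coefficients

/-- The degree-zero part of a form. -/
noncomputable def scalarPart : AlgForm R n →ₐ[R] R :=
  (Algebra.TensorProduct.rid ℝ R R).toAlgHom.comp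
    (Algebra.TensorProduct.map (AlgHom.id R R) ExteriorAlgebra.algebraMapInv)

/-- The coefficient `X_{b_0⋯b_{p-1}}`, obtained by contracting with `∂_{b_0}, …, ∂_{b_{p-1}}` in
turn. -/
noncomputable def coeff : (p : ℕ) → (Fin p → Fin n) → AlgForm R n →ₗ[R] R
  | 0, _ => scalarPart.toLinearMap
  | p + 1, b => coeff p (Fin.tail b) ∘ₗ contract (b 0)

/-- The coordinate form `dx^{b_0} ∧ ⋯ ∧ dx^{b_{p-1}}`. -/
noncomputable def dxMulti {p : ℕ} (b : Fin p → Fin n) : AlgForm R n :=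
  (List.ofFn fun t => dx (b t)).prod

variable {p q : ℕ} {X Y : AlgForm R n}

theorem scalarPart_dx (k : Fin n) : scalarPart (dx k : AlgForm R n) = 0 := by
  change ExteriorAlgebra.algebraMapInv
    (ExteriorAlgebra.ι ℝ (Pi.single k (1 : ℝ) : Fin n → ℝ)) • (1 : R) = 0
  rw [ExteriorAlgebra.algebraMapInv, ExteriorAlgebra.lift_ι_apply, LinearMap.zero_apply, zero_smul]

theorem scalarPart_coeffDeriv (δ : Derivation ℝ R R) :
    scalarPart (coeffDeriv δ X) = δ (scalarPart X) := by
  induction X using TensorProduct.induction_on with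
  | zero => simp only [map_zero]
  | tmul r e => exact (δ.map_smul (ExteriorAlgebra.algebraMapInv e) r).symm
  | add X₁ X₂ h₁ h₂ => simp only [map_add, h₁, h₂]

theorem coeff_zero (b : Fin 0 → Fin n) : coeff 0 b X = scalarPart X :=
  rfl

theorem coeff_succ (b : Fin (p + 1) → Fin n) :
    coeff (p + 1) b X = coeff p (Fin.tail b) (contract (b 0) X) :=
  rfl

theorem coeff_coeffDeriv (δ : Derivation ℝ R R) (b : Fin p → Fin n) :
    coeff p b (coeffDeriv δ X) = δ (coeff p b X) := by
  induction p generalizing X with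
  | zero => exact scalarPart_coeffDeriv δ
  | succ p ih => rw [coeff_succ, coeff_succ, ← coeffDeriv_contract, ih]

theorem tail_comp_succ_succAbove (b : Fin (p + 2) → Fin n) (k : Fin (p + 1)) :
    Fin.tail (b ∘ k.succ.succAbove) = Fin.tail b ∘ k.succAbove := by
  ext t
  simp only [Fin.tail, Function.comp_apply, Fin.succ_succAbove_succ]

theorem coeff_eq_contract (b : Fin (p + 1) → Fin n) (k : Fin (p + 1)) :
    coeff (p + 1) b X = (-1) ^ (k : ℕ) * coeff p (b ∘ k.succAbove) (contract (b k) X) := by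
  induction p generalizing X with
  | zero =>
    rw [Fin.fin_one_eq_zero k, Fin.val_zero, pow_zero, one_mul]
    rfl
  | succ p ih =>
    cases k using Fin.cases with
    | zero => rw [Fin.val_zero, pow_zero, one_mul]; rfl
    | succ k =>
      rw [coeff_succ, ih (Fin.tail b) k, coeff_succ, contract_contract, map_neg, Fin.val_succ,
        pow_succ]
      rw [tail_comp_succ_succAbove, mul_neg, mul_neg_one, neg_mul]
      rfl

theorem coeff_succ_dx_mul (j : Fin n) (b : Fin (p + 1) → Fin n) :
    coeff (p + 1) b (dx j * X) = (if b 0 = j then coeff p (Fin.tail b) X else 0)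
      - coeff p (Fin.tail b) (dx j * contract (b 0) X) := by
  rw [coeff_succ, contract_mul, contract_dx, involute_dx, neg_mul, ← sub_eq_add_neg, map_sub,
    ite_mul, one_mul, zero_mul, apply_ite (coeff p (Fin.tail b)), map_zero]

theorem coeff_dx_mul (j : Fin n) (b : Fin (p + 1) → Fin n) :
    coeff (p + 1) b (dx j * X) =
      ∑ k : Fin (p + 1), (-1) ^ (k : ℕ) * if b k = j then coeff p (b ∘ k.succAbove) X else 0 := by
  induction p generalizing X with
  | zero =>
    rw [coeff_succ_dx_mul, coeff_zero, coeff_zero, map_mul, scalarPart_dx, zero_mul, sub_zero,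
      Fin.sum_univ_one, Fin.val_zero, pow_zero, one_mul, coeff_zero]
  | succ p ih =>
    rw [coeff_succ_dx_mul, ih, Fin.sum_univ_succ (n := p + 1), Fin.val_zero, pow_zero, one_mul,
      sub_eq_add_neg, ← Finset.sum_neg_distrib]
    congr 1
    refine Finset.sum_congr rfl fun k _ => ?_
    rw [coeff_succ (b ∘ k.succ.succAbove), tail_comp_succ_succAbove, Fin.val_succ, pow_succ,
      mul_neg_one, neg_mul]
    rfl

theorem coeff_oneForm_mul (g : Fin n → R) (b : Fin (p + 1) → Fin n) :
    coeff (p + 1) b (oneForm g * X) =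
      ∑ k : Fin (p + 1), (-1) ^ (k : ℕ) * (g (b k) * coeff p (b ∘ k.succAbove) X) := by
  simp only [oneForm_apply, Finset.sum_mul, map_sum, smul_mul_assoc, map_smul, coeff_dx_mul,
    smul_eq_mul, Finset.mul_sum]
  rw [Finset.sum_comm]
  refine Finset.sum_congr rfl fun k _ => ?_
  simp [mul_left_comm]

theorem coeff_zero_oneForm_mul (g : Fin n → R) (b : Fin 0 → Fin n) :
    coeff 0 b (oneForm g * X) = 0 := by
  simp only [coeff_zero, oneForm_apply, map_mul, map_sum, map_smul, scalarPart_dx, smul_zero,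
    Finset.sum_const_zero, zero_mul]

theorem coeff_d (D : Fin n → Derivation ℝ R R) (b : Fin (p + 1) → Fin n) :
    coeff (p + 1) b (d D X) =
      ∑ k : Fin (p + 1), (-1) ^ (k : ℕ) * D (b k) (coeff p (b ∘ k.succAbove) X) := by
  simp only [d_apply, map_sum, coeff_dx_mul, coeff_coeffDeriv]
  rw [Finset.sum_comm]
  simp

theorem coeff_oneForm_mul_contract (g : Fin n → R) (m : Fin n) (b : Fin p → Fin n) :
    coeff p b (oneForm g * contract m X) =
      ∑ k : Fin p, g (b k) * coeff p (Function.update b k m) X := by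
  cases p with
  | zero => rw [coeff_zero_oneForm_mul, Finset.univ_eq_empty, Finset.sum_empty]
  | succ p =>
    rw [coeff_oneForm_mul]
    refine Finset.sum_congr rfl fun k _ => ?_
    rw [coeff_eq_contract (Function.update b k m) k, Function.update_self]
    have update_comp_succAbove : Function.update b k m ∘ k.succAbove = b ∘ k.succAbove :=
      Function.update_comp_eq_of_notMem_range b m fun ⟨t, ht⟩ => k.succAbove_ne t ht
    rw [update_comp_succAbove, mul_left_comm]

theorem dxMulti_append (b : Fin p → Fin n) (c : Fin q → Fin n) :
    dxMulti (R := R) (Fin.append b c) = dxMulti b * dxMulti c := by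
  have dx_append : (fun t => dx (R := R) (Fin.append b c t)) =
      Fin.append (fun t => dx (b t)) (fun t => dx (c t)) := by
    refine funext (Fin.addCases (fun t => ?_) fun t => ?_)
    · simp only [Fin.append_left]
    · simp only [Fin.append_right]
  rw [dxMulti, dx_append, List.ofFn_fin_append, List.prod_append]
  rfl

theorem dxMulti_cons (m : Fin n) (b : Fin p → Fin n) :
    dxMulti (R := R) (Fin.cons m b : Fin (p + 1) → Fin n) = dx m * dxMulti b := by
  simp [dxMulti, List.ofFn_succ]

theorem dxMulti_mem_homogeneous (b : Fin p → Fin n) :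
    (dxMulti b : AlgForm R n) ∈ homogeneous R n p := by
  induction p with
  | zero => exact Submodule.one_le.mp (pow_zero (LinearMap.range (oneForm (R := R))) ▸ le_rfl)
  | succ p ih =>
    rw [← Fin.cons_self_tail b, dxMulti_cons]
    exact dx_mul_mem_homogeneous _ (ih _)

theorem coeff_dxMulti (a b : Fin p → Fin n) :
    coeff p a (dxMulti b : AlgForm R n) =
      (Matrix.of fun i j => if a i = b j then 1 else 0).det := by
  induction p with
  | zero => simp [coeff_zero, dxMulti]
  | succ p ih =>
    obtain ⟨m, b, rfl⟩ : ∃ m c, b = Fin.cons m c := ⟨_, _, (Fin.cons_self_tail b).symm⟩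
    rw [dxMulti_cons, coeff_dx_mul, Matrix.det_succ_column_zero]
    refine Finset.sum_congr rfl fun k _ => ?_
    rw [ih]
    simp only [Matrix.of_apply, Fin.cons_zero, mul_assoc, ite_mul, one_mul, zero_mul]
    rfl

theorem sum_coeff_smul_dxMulti (hX : X ∈ homogeneous R n p) :
    ∑ b, coeff p b X • dxMulti b = (p.factorial : ℝ) • X := by
  induction p generalizing X with
  | zero =>
    obtain ⟨r, rfl⟩ := Submodule.mem_one.mp (by rwa [homogeneous, pow_zero] at hX)
    simp [coeff_zero, dxMulti, Algebra.algebraMap_eq_smul_one]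
  | succ p ih =>
    calc ∑ b, coeff (p + 1) b X • dxMulti b
        = ∑ m, ∑ b, coeff p b (contract m X) • (dx m * dxMulti b) := by
          rw [← (Fin.consEquiv fun _ : Fin (p + 1) => Fin n).sum_comp, Fintype.sum_prod_type]
          exact Finset.sum_congr rfl fun m _ => Finset.sum_congr rfl fun b _ =>
            congr_arg (coeff p b (contract m X) • ·) (dxMulti_cons m b)
      _ = ∑ m, dx m * (p.factorial : ℝ) • contract m X := by
          simp only [← ih (contract_mem_homogeneous _ hX), Finset.mul_sum, mul_smul_comm]
      _ = ((p + 1).factorial : ℝ) • X := by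
          simp only [mul_smul_comm, ← Finset.smul_sum, sum_dx_mul_contract hX, smul_smul]
          rw [Nat.factorial_succ, mul_comm, Nat.cast_mul]

theorem coeff_dxMulti_mul (a : Fin (p + q) → Fin n) (b : Fin p → Fin n) (c : Fin q → Fin n) :
    coeff (p + q) a (dxMulti b * dxMulti c : AlgForm R n) =
      ∑ σ : Equiv.Perm (Fin (p + q)), (Equiv.Perm.sign σ : ℤ) •
        ((if a ∘ σ ∘ Fin.castAdd q = b then 1 else 0) *
          (if a ∘ σ ∘ Fin.natAdd p = c then 1 else 0)) := by
  rw [← dxMulti_append, coeff_dxMulti, Matrix.det_apply]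
  exact Finset.sum_congr rfl fun σ _ => congr_arg _ (prod_boole_append (a ∘ σ) b c)

theorem coeff_mul (hX : X ∈ homogeneous R n p) (hY : Y ∈ homogeneous R n q)
    (a : Fin (p + q) → Fin n) :
    coeff (p + q) a (X * Y) = ((p.factorial * q.factorial : ℕ) : ℝ)⁻¹ •
      ∑ σ : Equiv.Perm (Fin (p + q)), (Equiv.Perm.sign σ : ℤ) •
        (coeff p (a ∘ σ ∘ Fin.castAdd q) X * coeff q (a ∘ σ ∘ Fin.natAdd p) Y) := by
  have factorial_ne_zero : ((p.factorial * q.factorial : ℕ) : ℝ) ≠ 0 :=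
    Nat.cast_ne_zero.mpr (by positivity)
  have factorial_smul_mul : ((p.factorial * q.factorial : ℕ) : ℝ) • (X * Y) =
      (∑ b, coeff p b X • dxMulti b) * ∑ c, coeff q c Y • dxMulti c := by
    rw [sum_coeff_smul_dxMulti hX, sum_coeff_smul_dxMulti hY, smul_mul_smul_comm, Nat.cast_mul]
  rw [eq_inv_smul_iff₀ factorial_ne_zero, ← LinearMap.map_smul_of_tower, factorial_smul_mul]
  simp only [Finset.sum_mul_sum, map_sum, smul_mul_smul_comm, map_smul, coeff_dxMulti_mul,
    Finset.smul_sum]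
  rw [Finset.sum_comm_cycle]
  refine Finset.sum_congr rfl fun σ _ => ?_
  simp only [smul_comm _ (Equiv.Perm.sign σ : ℤ), ← Finset.smul_sum, smul_eq_mul, mul_ite, mul_one,
    mul_zero, Finset.sum_ite_eq, Finset.mem_univ, if_true]

theorem coeff_sum_smul_dxMulti {c : (Fin p → Fin n) → R}
    (hc : ∀ b (σ : Equiv.Perm (Fin p)), c (b ∘ σ) = (Equiv.Perm.sign σ : ℤ) • c b)
    (a : Fin p → Fin n) :
    coeff p a (∑ b, c b • dxMulti b) = (p.factorial : ℝ) • c a := by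
  have prod_boole (σ : Equiv.Perm (Fin p)) (b : Fin p → Fin n) :
      ∏ t, (if a (σ t) = b t then (1 : R) else 0) = if a ∘ σ = b then 1 else 0 := by
    simp only [Finset.prod_boole, Finset.mem_univ, true_implies, funext_iff, Function.comp_apply]
  have sign_smul_smul (σ : Equiv.Perm (Fin p)) :
      (Equiv.Perm.sign σ : ℤ) • (Equiv.Perm.sign σ : ℤ) • c a = c a := by
    rw [smul_smul, Int.units_coe_mul_self, one_smul]
  simp only [map_sum, map_smul, coeff_dxMulti, Matrix.det_apply, Matrix.of_apply, prod_boole,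
    Finset.smul_sum]
  rw [Finset.sum_comm]
  simp only [Units.smul_def, smul_comm _ (Equiv.Perm.sign _ : ℤ), ← Finset.smul_sum, smul_eq_mul,
    mul_ite, mul_one, mul_zero, Finset.sum_ite_eq, Finset.mem_univ, if_true]
  simp only [hc, sign_smul_smul, Finset.sum_const, Finset.card_univ, Fintype.card_perm,
    Fintype.card_fin]
  exact (Nat.cast_smul_eq_nsmul ℝ _ _).symm

end Coefficients

section CurvatureForms

open Matrix

variable (D : Fin n → Derivation ℝ R R) (Γ : Fin n → Fin n → Fin n → R) (ω : Fin n → Fin n → R)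

theorem coeff_one_oneForm (g : Fin n → R) (b : Fin 1 → Fin n) :
    coeff 1 b (oneForm g) = g (b 0) := by
  rw [← mul_one (oneForm g), coeff_oneForm_mul, Fin.sum_univ_one, coeff_zero, map_one, Fin.val_zero,
    pow_zero, one_mul, mul_one]

theorem coeff_curv (i j : Fin n) (b : Fin 2 → Fin n) :
    coeff 2 b (curv D Γ i j) = D (b 0) (Γ i j (b 1)) - D (b 1) (Γ i j (b 0)) +
      ∑ m, (Γ i m (b 0) * Γ m j (b 1) - Γ i m (b 1) * Γ m j (b 0)) := by
  have coeff_d_oneForm (g : Fin n → R) :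
      coeff 2 b (d D (oneForm g)) = D (b 0) (g (b 1)) - D (b 1) (g (b 0)) := by
    rw [coeff_d, Fin.sum_univ_two, coeff_one_oneForm, coeff_one_oneForm, Fin.val_zero, Fin.val_one,
      pow_zero, pow_one, one_mul, neg_one_mul, ← sub_eq_add_neg]
    rfl
  have coeff_oneForm_mul_oneForm (g h : Fin n → R) :
      coeff 2 b (oneForm g * oneForm h) = g (b 0) * h (b 1) - g (b 1) * h (b 0) := by
    rw [coeff_oneForm_mul, Fin.sum_univ_two, coeff_one_oneForm, coeff_one_oneForm, Fin.val_zero,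
      Fin.val_one, pow_zero, pow_one, one_mul, neg_one_mul, ← sub_eq_add_neg]
    rfl
  simp only [curv, Matrix.add_apply, map_apply, mul_apply, conn, of_apply, map_add, map_sum,
    coeff_d_oneForm, coeff_oneForm_mul_oneForm]

theorem curv_mem_homogeneous (i j : Fin n) : curv D Γ i j ∈ homogeneous R n 2 :=
  add_mem (d_mem_homogeneous D (oneForm_mem_homogeneous _)) (by
    rw [mul_apply]
    exact sum_mem fun m _ => oneForm_mul_mem_homogeneous _ (oneForm_mem_homogeneous _))

theorem hMatrix_mem_homogeneous (i j : Fin n) : hMatrix D Γ ω i j ∈ homogeneous R n 2 := by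
  rw [hMatrix_apply]
  exact Submodule.smul_of_tower_mem _ _
    (sum_mem fun s _ => Submodule.smul_mem _ _ (curv_mem_homogeneous D Γ j s))

end CurvatureForms

end AlgForm

section SmoothFunctions

/-- The algebra of functions that are smooth on `U`. Their values off `U` are not restricted. -/
def smoothFunctions (U : Set (Pt n)) : Subalgebra ℝ (Pt n → ℝ) where
  carrier := {f | ContDiffOn ℝ (⊤ : ℕ∞) f U}
  mul_mem' hf hg := hf.mul hg
  add_mem' hf hg := hf.add hg
  algebraMap_mem' _ := contDiffOn_const

variable {U : Set (Pt n)} {f g : Pt n → ℝ}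

theorem eqOn_pd (hU : IsOpen U) (h : U.EqOn f g) (i : Fin n) : U.EqOn (pd i f) (pd i g) :=
  fun x hx => by rw [pd, pd, (h.eventuallyEq_of_mem (hU.mem_nhds hx)).fderiv_eq]

theorem differentiableAt_of_mem (hU : IsOpen U) (f : smoothFunctions U) {x : Pt n} (hx : x ∈ U) :
    DifferentiableAt ℝ (f : Pt n → ℝ) x :=
  (f.2.differentiableOn (by simp)).differentiableAt (hU.mem_nhds hx)

theorem pd_add (i : Fin n) {x : Pt n} (hf : DifferentiableAt ℝ f x)
    (hg : DifferentiableAt ℝ g x) : pd i (f + g) x = pd i f x + pd i g x := by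
  rw [pd, fderiv_add hf hg]
  rfl

theorem pd_sub (i : Fin n) {x : Pt n} (hf : DifferentiableAt ℝ f x)
    (hg : DifferentiableAt ℝ g x) : pd i (f - g) x = pd i f x - pd i g x := by
  rw [pd, fderiv_sub hf hg]
  rfl

theorem pd_mul (i : Fin n) {x : Pt n} (hf : DifferentiableAt ℝ f x)
    (hg : DifferentiableAt ℝ g x) : pd i (f * g) x = f x * pd i g x + g x * pd i f x := by
  rw [pd, fderiv_mul hf hg]
  rfl

theorem pd_const_smul (i : Fin n) {x : Pt n} (c : ℝ) (hf : DifferentiableAt ℝ f x) :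
    pd i (c • f) x = c * pd i f x := by
  rw [pd, fderiv_const_smul hf]
  rfl

theorem contDiffOn_pd (hU : IsOpen U) (i : Fin n) (hf : ContDiffOn ℝ (⊤ : ℕ∞) f U) :
    ContDiffOn ℝ (⊤ : ℕ∞) (pd i f) U :=
  (hf.fderiv_of_isOpen hU (by simp)).clm_apply contDiffOn_const

theorem pd_pd_comm (hU : IsOpen U) (hf : ContDiffOn ℝ (⊤ : ℕ∞) f U) {x : Pt n} (hx : x ∈ U)
    (i j : Fin n) : pd i (pd j f) x = pd j (pd i f) x := by
  have hf' := hf.contDiffAt (hU.mem_nhds hx)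
  have hd : DifferentiableAt ℝ (fderiv ℝ f) x :=
    (hf'.fderiv_right (m := 1) (WithTop.coe_le_coe.2 le_top)).differentiableAt one_ne_zero
  have pd_pd (i j : Fin n) :
      pd i (pd j f) x = fderiv ℝ (fderiv ℝ f) x (Pi.single i 1) (Pi.single j 1) := by
    unfold pd
    rw [fderiv_clm_apply hd (differentiableAt_const _)]
    simp
  rw [pd_pd, pd_pd]
  exact (hf'.isSymmSndFDerivAt (by simpa using ENat.LEInfty.out)).eq _ _

/-- The partial derivative `∂_i` as a derivation. It is cut off outside `U`, where the functions
need not be differentiable. -/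
noncomputable def partialDeriv (hU : IsOpen U) (i : Fin n) :
    Derivation ℝ (smoothFunctions U) (smoothFunctions U) :=
  Derivation.mk'
    { toFun f := ⟨U.indicator (pd i f), (contDiffOn_pd hU i f.2).congr Set.eqOn_indicator⟩
      map_add' f g := by
        ext x
        by_cases hx : x ∈ U
        · simp [hx, pd_add i (differentiableAt_of_mem hU f hx) (differentiableAt_of_mem hU g hx)]
        · simp [hx]
      map_smul' c f := by
        ext x
        by_cases hx : x ∈ U
        · simp [hx, pd_const_smul i c (differentiableAt_of_mem hU f hx)]
        · simp [hx] }
    fun f g => by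
      ext x
      by_cases hx : x ∈ U
      · simp [hx, pd_mul i (differentiableAt_of_mem hU f hx) (differentiableAt_of_mem hU g hx)]
      · simp [hx]

theorem eqOn_partialDeriv (hU : IsOpen U) (i : Fin n) {f : Pt n → ℝ} {r : smoothFunctions U}
    (h : U.EqOn f r) : U.EqOn (pd i f) (partialDeriv hU i r) :=
  (eqOn_pd hU h i).trans (Set.eqOn_indicator (f := pd i r)).symm

theorem partialDeriv_comm (hU : IsOpen U) (i j : Fin n) (f : smoothFunctions U) :
    partialDeriv hU i (partialDeriv hU j f) = partialDeriv hU j (partialDeriv hU i f) := by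
  ext x
  by_cases hx : x ∈ U
  · rw [← eqOn_partialDeriv hU i (eqOn_partialDeriv hU j (Set.eqOn_refl _ _)) hx,
      ← eqOn_partialDeriv hU j (eqOn_partialDeriv hU i (Set.eqOn_refl _ _)) hx,
      pd_pd_comm hU f.2 hx]
  · exact (Set.indicator_of_notMem hx _).trans (Set.indicator_of_notMem hx _).symm

end SmoothFunctions

section Represents

open AlgForm

/-- `X` is the form on `U` whose coefficients are those of the `p`-form `ξ`. -/
structure Represents {U : Set (Pt n)} (p : ℕ) (ξ : Form n)
    (X : AlgForm (smoothFunctions U) n) : Prop where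
  mem_homogeneous : X ∈ homogeneous (smoothFunctions U) n p
  eqOn_coeff : ∀ a : ℕ → Fin n, U.EqOn (ξ a) (coeff p (fun t => a t) X : smoothFunctions U)

variable {U : Set (Pt n)} {p q : ℕ} {ξ η : Form n} {X Y : AlgForm (smoothFunctions U) n}

theorem IsAnti.comp_perm (hξ : IsAnti p ξ) {b : (Fin p → Fin n) → ℕ → Fin n}
    (hb : ∀ c (t : Fin p), b c t = c t) (hdep : DependsOn p ξ) (σ : Equiv.Perm (Fin p))
    (c : Fin p → Fin n) : ξ (b (c ∘ σ)) = (Equiv.Perm.sign σ : ℤ) • ξ (b c) := by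
  induction σ using Equiv.Perm.swap_induction_on generalizing c with
  | one => simp
  | swap_mul σ i j hij ih =>
    have swap_slots : ξ (b (c ∘ Equiv.swap i j)) = -ξ (b c) := by
      refine Eq.trans ?_ (funext (hξ (b c) i j i.2 j.2 (Fin.val_ne_of_ne hij)))
      refine hdep _ _ fun t ht => ?_
      lift t to Fin p using ht
      rw [hb, ← Fin.val_injective.map_swap, hb]
      rfl
    rw [Equiv.Perm.coe_mul, ← Function.comp_assoc, ih, swap_slots]
    simp [Equiv.Perm.sign_mul, Equiv.Perm.sign_swap hij]

theorem IsPForm.exists_represents (hξ : IsPForm U p ξ) :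
    ∃ X : AlgForm (smoothFunctions U) n, Represents p ξ X := by
  rcases isEmpty_or_nonempty (ℕ → Fin n) with _ | ⟨⟨a₀⟩⟩
  · exact ⟨0, zero_mem _, isEmptyElim⟩
  let slots (b : Fin p → Fin n) : ℕ → Fin n := Function.extend Fin.val b a₀
  have slots_val (b) (t : Fin p) : slots b t = b t := Fin.val_injective.extend_apply b a₀ t
  let c (b : Fin p → Fin n) : smoothFunctions U := ⟨ξ (slots b), hξ.2.2 _⟩
  have c_comp (b) (σ : Equiv.Perm (Fin p)) : c (b ∘ σ) = (Equiv.Perm.sign σ : ℤ) • c b :=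
    Subtype.ext (hξ.2.1.comp_perm slots_val hξ.1 σ b)
  refine ⟨(p.factorial : ℝ)⁻¹ • ∑ b, c b • dxMulti b, ?_, fun a x _ => ?_⟩
  · exact Submodule.smul_of_tower_mem _ _
      (sum_mem fun b _ => Submodule.smul_mem _ _ (dxMulti_mem_homogeneous b))
  · rw [LinearMap.map_smul_of_tower, coeff_sum_smul_dxMulti c_comp,
      inv_smul_smul₀ (Nat.cast_ne_zero.mpr p.factorial_ne_zero)]
    exact congr_fun (hξ.1 _ _ fun t ht => (slots_val (fun t => a t) ⟨t, ht⟩).symm) x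

theorem val_comp_succAbove (a : ℕ → Fin n) (k : Fin (p + 1)) :
    (fun t : Fin (p + 1) => a t) ∘ k.succAbove =
      fun t : Fin p => if (t : ℕ) < k then a t else a (t + 1) := by
  ext t
  simp only [Function.comp_apply, Fin.succAbove, Fin.lt_def, Fin.val_castSucc, apply_ite Fin.val,
    Fin.val_succ, apply_ite a]

theorem update_val (a : ℕ → Fin n) (k : Fin p) (m : Fin n) :
    Function.update (fun t : Fin p => a t) k m =
      fun t : Fin p => if (t : ℕ) = k then m else a t := by
  ext t
  rw [Function.update_apply]
  simp only [Fin.ext_iff]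

namespace Represents

theorem eqOn (hξ : Represents p ξ X) (hη : Represents q η X) (h : p = q) (a : ℕ → Fin n) :
    U.EqOn (ξ a) (η a) := by
  subst h
  exact (hξ.eqOn_coeff a).trans (hη.eqOn_coeff a).symm

theorem congr_degree (hξ : Represents p ξ X) (h : X ≠ 0 → p = q) : Represents q ξ X := by
  by_cases hX : X = 0
  · subst hX
    exact ⟨zero_mem _, fun a => by simpa only [map_zero] using hξ.eqOn_coeff a⟩
  · exact h hX ▸ hξ

theorem add (hξ : Represents p ξ X) (hη : Represents p η Y) : Represents p (ξ + η) (X + Y) :=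
  ⟨add_mem hξ.mem_homogeneous hη.mem_homogeneous, fun a x hx => by
    rw [map_add]
    exact congr_arg₂ (· + ·) (hξ.eqOn_coeff a hx) (hη.eqOn_coeff a hx)⟩

theorem const_smul (c : ℝ) (hξ : Represents p ξ X) : Represents p (c • ξ) (c • X) :=
  ⟨Submodule.smul_of_tower_mem _ c hξ.mem_homogeneous, fun a x hx => by
    rw [LinearMap.map_smul_of_tower]
    exact congr_arg (c * ·) (hξ.eqOn_coeff a hx)⟩

theorem sum {ι : Type*} (s : Finset ι) {ξ : ι → Form n}
    {X : ι → AlgForm (smoothFunctions U) n} (h : ∀ i, Represents p (ξ i) (X i)) :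
    Represents p (∑ i ∈ s, ξ i) (∑ i ∈ s, X i) := by
  classical
  induction s using Finset.induction_on with
  | empty => exact ⟨zero_mem _, fun a x _ => by simp⟩
  | insert i s hi ih =>
    rw [Finset.sum_insert hi, Finset.sum_insert hi]
    exact (h i).add ih

theorem fmul {f : Pt n → ℝ} {r : smoothFunctions U} (hf : U.EqOn f r) (hξ : Represents p ξ X) :
    Represents p (fmul f ξ) (r • X) :=
  ⟨Submodule.smul_mem _ r hξ.mem_homogeneous, fun a x hx => by
    rw [map_smul]
    exact congr_arg₂ (· * ·) (hf hx) (hξ.eqOn_coeff a hx)⟩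

theorem wedge (hξ : Represents p ξ X) (hη : Represents q η Y) :
    Represents (p + q) (wedge p q ξ η) (X * Y) :=
  ⟨mul_mem_homogeneous hξ.mem_homogeneous hη.mem_homogeneous, fun a x hx => by
    rw [coeff_mul hξ.mem_homogeneous hη.mem_homogeneous]
    simp only [Stmt12.wedge, hξ.eqOn_coeff _ hx, hη.eqOn_coeff _ hx]
    simp only [Fin.is_lt, dif_pos, mul_assoc]
    simp only [zsmul_eq_mul, SetLike.val_smul, AddSubmonoidClass.coe_finsetSum,
      MulMemClass.coe_mul, SubringClass.coe_intCast, Pi.smul_apply, Finset.sum_apply,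
      Pi.mul_apply, Pi.intCast_apply, smul_eq_mul]
    rfl⟩

theorem intr (m : Fin n) (hξ : Represents p ξ X) :
    Represents (p - 1) (intr p m ξ) (contract m X) := by
  cases p with
  | zero =>
    rw [contract_of_mem_homogeneous_zero m hξ.mem_homogeneous]
    exact ⟨zero_mem _, fun a x _ => by simp [Stmt12.intr]⟩
  | succ p =>
    exact ⟨contract_mem_homogeneous m hξ.mem_homogeneous, fun a x hx => by
      rw [Stmt12.intr, if_neg p.succ_ne_zero]
      exact hξ.eqOn_coeff _ hx⟩

theorem extd (hU : IsOpen U) (hξ : Represents p ξ X) :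
    Represents (p + 1) (extd p ξ) (d (partialDeriv hU) X) :=
  ⟨d_mem_homogeneous _ hξ.mem_homogeneous, fun a x hx => by
    rw [coeff_d]
    simp only [Stmt12.extd, eqOn_partialDeriv hU _ (hξ.eqOn_coeff _) hx]
    simp only [AddSubmonoidClass.coe_finsetSum, MulMemClass.coe_mul, SubmonoidClass.coe_pow,
      NegMemClass.coe_neg, OneMemClass.coe_one, Finset.sum_apply, Pi.mul_apply, Pi.pow_apply,
      Pi.neg_apply, Pi.one_apply]
    simp only [val_comp_succAbove]⟩

theorem nabla (hU : IsOpen U) {Γ : Fin n → Fin n → Fin n → Pt n → ℝ}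
    {G : Fin n → Fin n → Fin n → smoothFunctions U} (hΓ : ∀ i j k, U.EqOn (Γ i j k) (G i j k))
    (i : Fin n) (hξ : Represents p ξ X) :
    Represents p (nabla Γ i p ξ) (covDeriv (partialDeriv hU) G i X) :=
  ⟨covDeriv_mem_homogeneous _ _ i hξ.mem_homogeneous, fun a x hx => by
    simp only [covDeriv, map_sub, map_sum, coeff_coeffDeriv, conn, Matrix.of_apply,
      coeff_oneForm_mul_contract]
    simp only [Stmt12.nabla, eqOn_partialDeriv hU _ (hξ.eqOn_coeff _) hx, hΓ _ _ _ hx,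
      hξ.eqOn_coeff _ hx]
    simp only [AddSubgroupClass.coe_sub, AddSubmonoidClass.coe_finsetSum, MulMemClass.coe_mul,
      Pi.sub_apply, Finset.sum_apply, Pi.mul_apply]
    rw [Finset.sum_comm]
    simp only [update_val]⟩

end Represents

variable {U : Set (Pt n)} {ω : Fin n → Fin n → Pt n → ℝ} {Γ : Fin n → Fin n → Fin n → Pt n → ℝ}
variable {w : Fin n → Fin n → smoothFunctions U} {G : Fin n → Fin n → Fin n → smoothFunctions U}

/-- The left-hand side is the combination defining `H`; the right-hand side is `-2` times the
coefficient of `curv`, the curvature of the connection with opposite torsion. -/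
theorem covT_sub_Rc_sub_swap {x : Pt n} (hΓ : ∀ i j k, DifferentiableAt ℝ (Γ i j k) x)
    (l i j s : Fin n) :
    (covT Γ l j i s x - 2 * Rc Γ l j i s x) - (covT Γ l i j s x - 2 * Rc Γ l i j s x) =
      -2 * (pd i (Γ l s j) x - pd j (Γ l s i) x +
        ∑ m, (Γ l m i x * Γ m s j x - Γ l m j x * Γ m s i x)) := by
  have pd_Tor (l i j s : Fin n) :
      pd s (Tor Γ l i j) x = pd s (Γ l i j) x - pd s (Γ l j i) x :=
    pd_sub s (hΓ l i j) (hΓ l j i)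
  simp only [covT, Rc, pd_Tor, Tor, mul_sub, Finset.sum_sub_distrib]
  simp only [mul_comm]
  ring

namespace Represents

variable {p q : ℕ} {ξ η : Form n} {X Y : AlgForm (smoothFunctions U) n}

theorem hform (hU : IsOpen U) (hω : ∀ i j, U.EqOn (ω i j) (w i j))
    (hΓ : ∀ i j k, U.EqOn (Γ i j k) (G i j k)) (i j : Fin n) :
    Represents 2 (Hform ω Γ i j) (hMatrix (partialDeriv hU) G w i j) :=
  ⟨hMatrix_mem_homogeneous _ _ _ i j, fun a x hx => by
    have differentiableAt_Γ (i j k : Fin n) : DifferentiableAt ℝ (Γ i j k) x :=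
      differentiableAt_of_mem hU ⟨Γ i j k, (G i j k).2.congr (hΓ i j k)⟩ hx
    simp only [Hform, covT_sub_Rc_sub_swap differentiableAt_Γ,
      eqOn_partialDeriv hU _ (hΓ _ _ _) hx, hω _ _ hx, hΓ _ _ _ hx]
    simp only [hMatrix_apply, LinearMap.map_smul_of_tower, map_sum, map_smul, coeff_curv,
      SetLike.val_smul, AddSubmonoidClass.coe_finsetSum, AddMemClass.coe_add, MulMemClass.coe_mul,
      AddSubgroupClass.coe_sub, Pi.smul_apply, Finset.sum_apply, Pi.add_apply, Pi.mul_apply,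
      Pi.sub_apply, smul_eq_mul, mul_left_comm _ (-2 : ℝ), ← Finset.mul_sum, Fin.val_zero,
      Fin.val_one]
    ring⟩

theorem qcorr (hU : IsOpen U) (hω : ∀ i j, U.EqOn (ω i j) (w i j))
    (hΓ : ∀ i j k, U.EqOn (Γ i j k) (G i j k)) (hξ : Represents p ξ X) (hη : Represents q η Y) :
    Represents (p + q) (Qcorr ω Γ p q ξ η) ((2⁻¹ : ℝ) • pairing (bivector w)
      (covDeriv (partialDeriv hU) G · X) (covDeriv (partialDeriv hU) G · Y)) := by
  rw [pairing_bivector]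
  exact .const_smul _ (.sum _ fun i => .sum _ fun j =>
    .fmul (hω i j) ((hξ.nabla hU hΓ i).wedge (hη.nabla hU hΓ j)))

theorem hatCorr (hU : IsOpen U) (hω : ∀ i j, U.EqOn (ω i j) (w i j))
    (hΓ : ∀ i j k, U.EqOn (Γ i j k) (G i j k)) (hξ : Represents p ξ X) (hη : Represents q η Y) :
    Represents (p + q) (HatCorr ω Γ p q ξ η) (pairing (hMatrix (partialDeriv hU) G w)
      (fun i => involute (contract i X)) (contract · Y)) := by
  have represents : Represents (2 + (p - 1) + (q - 1)) (HatCorr ω Γ p q ξ η) _ :=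
    .const_smul _ (.sum _ fun i => .sum _ fun j =>
      ((hform hU hω hΓ i j).wedge (hξ.intr i)).wedge (hη.intr j))
  simp only [involute_contract_of_mem_homogeneous _ hξ.mem_homogeneous, pairing_smul_left]
  refine represents.congr_degree fun pairing_ne_zero => ?_
  have hp : p ≠ 0 := by
    rintro rfl
    exact pairing_ne_zero (by
      simp [contract_of_mem_homogeneous_zero _ hξ.mem_homogeneous])
  have hq : q ≠ 0 := by
    rintro rfl
    exact pairing_ne_zero (by
      simp [contract_of_mem_homogeneous_zero _ hη.mem_homogeneous])
  omega

end Represents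

/-- `X.1 + λ X.2` is the form on `U` whose coefficients are those of `ξ.1 + λ ξ.2`. -/
def RepresentsL {U : Set (Pt n)} (p : ℕ) (ξ : FormL n)
    (X : AlgForm (smoothFunctions U) n × AlgForm (smoothFunctions U) n) : Prop :=
  Represents p ξ.1 X.1 ∧ Represents p ξ.2 X.2

theorem IsPFormL.exists_representsL {p : ℕ} {ξ : FormL n} (hξ : IsPFormL U p ξ) :
    ∃ X : AlgForm (smoothFunctions U) n × AlgForm (smoothFunctions U) n, RepresentsL p ξ X :=
  have ⟨X₀, h₀⟩ := hξ.1.exists_represents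
  have ⟨X₁, h₁⟩ := hξ.2.exists_represents
  ⟨(X₀, X₁), h₀, h₁⟩

namespace RepresentsL

variable {p q : ℕ} {ξ η : FormL n}
variable {X Y : AlgForm (smoothFunctions U) n × AlgForm (smoothFunctions U) n}

theorem eqOn (hξ : RepresentsL p ξ X) (hη : RepresentsL q η X) (h : p = q) (a : ℕ → Fin n)
    {x : Pt n} (hx : x ∈ U) : ξ.1 a x = η.1 a x ∧ ξ.2 a x = η.2 a x :=
  ⟨hξ.1.eqOn hη.1 h a hx, hξ.2.eqOn hη.2 h a hx⟩

theorem congr_degree (hξ : RepresentsL p ξ X) (h : p = q) : RepresentsL q ξ X :=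
  h ▸ hξ

theorem add (hξ : RepresentsL p ξ X) (hη : RepresentsL p η Y) : RepresentsL p (ξ + η) (X + Y) :=
  ⟨hξ.1.add hη.1, hξ.2.add hη.2⟩

theorem const_smul (c : ℝ) (hξ : RepresentsL p ξ X) : RepresentsL p (c • ξ) (c • X) :=
  ⟨hξ.1.const_smul c, hξ.2.const_smul c⟩

theorem extdL (hU : IsOpen U) (hξ : RepresentsL p ξ X) :
    RepresentsL (p + 1) (extdL p ξ) (X.map (d (partialDeriv hU)) (d (partialDeriv hU))) :=
  ⟨hξ.1.extd hU, hξ.2.extd hU⟩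

theorem wedge1 (hU : IsOpen U) (hω : ∀ i j, U.EqOn (ω i j) (w i j))
    (hΓ : ∀ i j k, U.EqOn (Γ i j k) (G i j k)) (hξ : RepresentsL p ξ X) (hη : RepresentsL q η Y) :
    RepresentsL (p + q) (wedge1 ω Γ p q ξ η) (quantumMul (partialDeriv hU) G w X Y) := by
  refine ⟨hξ.1.wedge hη.1, ?_⟩
  rw [quantumMul, quantumCorr, ← add_assoc]
  exact (((hξ.1.wedge hη.2).add (hξ.2.wedge hη.1)).add (hξ.1.qcorr hU hω hΓ hη.1)).add
    (hξ.1.hatCorr hU hω hΓ hη.1)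

theorem map_involute (hξ : RepresentsL p ξ X) : X.map involute involute = (-1 : ℝ) ^ p • X :=
  Prod.ext (involute_of_mem_homogeneous hξ.1.mem_homogeneous)
    (involute_of_mem_homogeneous hξ.2.mem_homogeneous)

end RepresentsL

theorem PoissonCompat.isParallel_bivector (hU : IsOpen U) (hω : ∀ i j, U.EqOn (ω i j) (w i j))
    (hΓ : ∀ i j k, U.EqOn (Γ i j k) (G i j k)) (hpc : PoissonCompat U ω Γ)
    (hw : ∀ i j, ∀ x ∉ U, (w i j : Pt n → ℝ) x = 0) :
    IsParallel (partialDeriv hU) G (bivector w) := by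
  refine AlgForm.isParallel_bivector fun i j m => Subtype.ext (funext fun x => ?_)
  simp only [AddMemClass.coe_add, AddSubmonoidClass.coe_finsetSum, MulMemClass.coe_mul,
    Pi.add_apply, Finset.sum_apply, Pi.mul_apply]
  by_cases hx : x ∈ U
  · rw [← eqOn_partialDeriv hU m (hω i j) hx]
    simp only [← hω _ _ hx, ← hΓ _ _ _ hx]
    exact hpc i j m x hx
  · have partialDeriv_eq_zero : (partialDeriv hU m (w i j) : Pt n → ℝ) x = 0 :=
      Set.indicator_of_notMem hx _
    simp [partialDeriv_eq_zero, hw _ _ x hx]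

theorem wedgeAssoc (hU : IsOpen U) (hωs : ∀ i j, ContDiffOn ℝ (⊤ : ℕ∞) (ω i j) U)
    (hΓs : ∀ i j k, ContDiffOn ℝ (⊤ : ℕ∞) (Γ i j k) U) : WedgeAssoc U ω Γ := by
  intro p q r ξ η ζ hξ hη hζ a x hx
  let w (i j : Fin n) : smoothFunctions U := ⟨ω i j, hωs i j⟩
  let G (i j k : Fin n) : smoothFunctions U := ⟨Γ i j k, hΓs i j k⟩
  have hw (i j : Fin n) : U.EqOn (ω i j) (w i j) := Set.eqOn_refl _ _
  have hG (i j k : Fin n) : U.EqOn (Γ i j k) (G i j k) := Set.eqOn_refl _ _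
  obtain ⟨X, hX⟩ := hξ.exists_representsL
  obtain ⟨Y, hY⟩ := hη.exists_representsL
  obtain ⟨Z, hZ⟩ := hζ.exists_representsL
  have left := (hX.wedge1 hU hw hG hY).wedge1 hU hw hG hZ
  have right := hX.wedge1 hU hw hG (hY.wedge1 hU hw hG hZ)
  rw [quantumMul_assoc] at left
  exact left.eqOn right (add_assoc p q r) a hx

theorem PoissonCompat.leibnizRule (hU : IsOpen U)
    (hωs : ∀ i j, ContDiffOn ℝ (⊤ : ℕ∞) (ω i j) U)
    (hΓs : ∀ i j k, ContDiffOn ℝ (⊤ : ℕ∞) (Γ i j k) U) (hpc : PoissonCompat U ω Γ) :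
    LeibnizRule U ω Γ := by
  intro p q ξ η hξ hη a x hx
  let w (i j : Fin n) : smoothFunctions U :=
    ⟨U.indicator (ω i j), (hωs i j).congr Set.eqOn_indicator⟩
  let G (i j k : Fin n) : smoothFunctions U := ⟨Γ i j k, hΓs i j k⟩
  have hw (i j : Fin n) : U.EqOn (ω i j) (w i j) := Set.eqOn_indicator.symm
  have hG (i j k : Fin n) : U.EqOn (Γ i j k) (G i j k) := Set.eqOn_refl _ _
  have parallel : IsParallel (partialDeriv hU) G (bivector w) :=
    hpc.isParallel_bivector hU hw hG fun _ _ _ hx => Set.indicator_of_notMem hx _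
  obtain ⟨X, hX⟩ := hξ.exists_representsL
  obtain ⟨Y, hY⟩ := hη.exists_representsL
  have left := (hX.wedge1 hU hw hG hY).extdL hU
  have right := (((hX.extdL hU).wedge1 hU hw hG hY).congr_degree (Nat.add_right_comm p 1 q)).add
    ((hX.wedge1 hU hw hG (hY.extdL hU)).const_smul ((-1) ^ p))
  rw [d_quantumMul (partialDeriv_comm hU) parallel, hX.map_involute, quantumMul_smul_left] at left
  exact left.eqOn right rfl a hx

end Represents

theorem statement_12_general (U : Set (Pt n)) (hU : IsOpen U)
    (ω : Fin n → Fin n → Pt n → ℝ)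
    (Γ : Fin n → Fin n → Fin n → Pt n → ℝ)
    (hωs : ∀ i j, ContDiffOn ℝ (⊤ : ℕ∞) (ω i j) U)
    (hΓs : ∀ i j k, ContDiffOn ℝ (⊤ : ℕ∞) (Γ i j k) U)
    (hpc : PoissonCompat U ω Γ) :
    WedgeAssoc U ω Γ ∧ LeibnizRule U ω Γ :=
  ⟨wedgeAssoc hU hωs hΓs, hpc.leibnizRule hU hωs hΓs⟩

/-- for Poisson-compatible `(ω, ∇)`, `(Ω(U) ⊗ ℝ[λ]/(λ²), ∧₁, d)` is a
differential graded algebra to order `λ`: the quantum wedge `∧₁` is associative and the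
undeformed exterior derivative satisfies the graded Leibniz rule for `∧₁`. -/
theorem statement_12 (U : Set (Pt n)) (hU : IsOpen U)
    (ω : Fin n → Fin n → Pt n → ℝ)
    (Γ : Fin n → Fin n → Fin n → Pt n → ℝ)
    (hωs : ∀ i j, ContDiffOn ℝ (⊤ : ℕ∞) (ω i j) U)
    (hΓs : ∀ i j k, ContDiffOn ℝ (⊤ : ℕ∞) (Γ i j k) U)
    (hanti : ∀ i j, ∀ x ∈ U, ω i j x = - ω j i x)
    (hpc : PoissonCompat U ω Γ) :
    WedgeAssoc U ω Γ ∧ LeibnizRule U ω Γ :=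
  statement_12_general U hU ω Γ hωs hΓs hpc

end Stmt12
end

section
/- On an open set U ⊆ ℝⁿ with smooth Christoffel symbols Γ^i_{jk} (torsion T^k_{ji} = Γ^k_{ji} − Γ^k_{ij}), for every smooth vector field v = (v^j) and every smooth p-form ξ: v⌟dξ + d(v⌟ξ) = v^j ∇_j ξ + Σ_{i,k} [(∂_i v^k + Γ^k_{im} v^m) + v^j T^k_{ji}] dx^i ∧ (∂_k⌟ξ), where dx^i ∧ (∂_k⌟ξ) is the wedge of the i-th coordinate 1-form with the interior product of ξ by the k-th coordinate vector field. (The left hand side is the Lie derivative of ξ along v.) -/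
namespace Stmt13

variable {n : ℕ}

/-- A point of the coordinate chart. -/
abbrev Pt (n : ℕ) := Fin n → ℝ

/-- The coefficient family of a differential form: a `p`-form is a family
`ξ_{a 0, …, a (p−1)}` of functions (only the first `p` index slots are used). -/
abbrev Form (n : ℕ) := (ℕ → Fin n) → Pt n → ℝ

/-- Partial derivative in the `i`-th coordinate direction. -/
noncomputable def pd (i : Fin n) (f : Pt n → ℝ) (x : Pt n) : ℝ :=
  fderiv ℝ f x (Pi.single i 1)

/-- Wedge product of a `p`-form and a `q`-form (coordinate formula). -/
noncomputable def wedge (p q : ℕ) (ξ η : Form n) : Form n := fun a x =>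
  ((p.factorial * q.factorial : ℕ) : ℝ)⁻¹ *
    ∑ σ : Equiv.Perm (Fin (p + q)),
      ((Equiv.Perm.sign σ : ℤ) : ℝ) *
        ξ (fun t => if h : t < p then a ((σ ⟨t, by omega⟩ : Fin (p + q)) : ℕ) else a t) x *
        η (fun t => if h : t < q then a ((σ ⟨p + t, by omega⟩ : Fin (p + q)) : ℕ) else a t) x

/-- Exterior derivative of a `p`-form:
`(dξ)_{a_0⋯a_p} = Σ_k (−1)^k ∂_{a_k} ξ_{a_0⋯(omit a_k)⋯a_p}`. -/
noncomputable def extd (p : ℕ) (ξ : Form n) : Form n := fun a x =>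
  ∑ k : Fin (p + 1),
    (-1 : ℝ) ^ (k : ℕ) *
      pd (a (k : ℕ)) (ξ (fun t => if t < (k : ℕ) then a t else a (t + 1))) x

/-- Interior product of a `p`-form with the `m`-th coordinate vector field
(zero on `0`-forms). -/
def intr (p : ℕ) (m : Fin n) (ξ : Form n) : Form n :=
  if p = 0 then (fun _ _ => 0)
  else fun a x => ξ (fun t => if t = 0 then m else a (t - 1)) x

/-- Interior product of a `p`-form with a vector field `v` (zero on `0`-forms). -/
noncomputable def iprod (p : ℕ) (v : Fin n → Pt n → ℝ) (ξ : Form n) : Form n :=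
  if p = 0 then (fun _ _ => 0)
  else fun a x => ∑ m, v m x * ξ (fun t => if t = 0 then m else a (t - 1)) x

/-- Covariant derivative of a `p`-form:
`(∇_i ξ)_{a_1⋯a_p} = ∂_i ξ_{a_1⋯a_p} − Σ_k Γ^m_{i a_k} ξ_{⋯ m ⋯}`. -/
noncomputable def nabla (Γ : Fin n → Fin n → Fin n → Pt n → ℝ) (i : Fin n) (p : ℕ)
    (ξ : Form n) : Form n := fun a x =>
  pd i (ξ a) x
    - ∑ k : Fin p, ∑ m, Γ m i (a (k : ℕ)) x * ξ (fun t => if t = (k : ℕ) then m else a t) x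

/-- Multiplication of a form by a scalar function. -/
def fmul (f : Pt n → ℝ) (ξ : Form n) : Form n := fun a x => f x * ξ a x

/-- `ξ` depends only on its first `p` index slots. -/
def DependsOn (p : ℕ) (ξ : Form n) : Prop :=
  ∀ a b : ℕ → Fin n, (∀ t, t < p → a t = b t) → ξ a = ξ b

/-- `ξ` is totally antisymmetric in its first `p` index slots. -/
def IsAnti (p : ℕ) (ξ : Form n) : Prop :=
  ∀ (a : ℕ → Fin n) (i j : ℕ), i < p → j < p → i ≠ j →
    ∀ x, ξ (fun t => a (Equiv.swap i j t)) x = - ξ a x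

/-- `ξ` has smooth coefficients on `U`. -/
def SmoothOn (U : Set (Pt n)) (ξ : Form n) : Prop :=
  ∀ a, ContDiffOn ℝ (⊤ : ℕ∞) (ξ a) U

/-- `ξ` is (the coefficient family of) a smooth `p`-form on `U`. -/
def IsPForm (U : Set (Pt n)) (p : ℕ) (ξ : Form n) : Prop :=
  DependsOn p ξ ∧ IsAnti p ξ ∧ SmoothOn U ξ

/-- Torsion `T^i_{jk} = Γ^i_{jk} - Γ^i_{kj}`. -/
def Tor (Γ : Fin n → Fin n → Fin n → Pt n → ℝ) (i j k : Fin n) (x : Pt n) : ℝ :=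
  Γ i j k x - Γ i k j x

/-- Curvature `R^l_{ijk} = ∂_j Γ^l_{ki} − ∂_k Γ^l_{ji} + Γ^m_{ki} Γ^l_{jm} − Γ^m_{ji} Γ^l_{km}`. -/
noncomputable def Rc (Γ : Fin n → Fin n → Fin n → Pt n → ℝ) (l i j k : Fin n)
    (x : Pt n) : ℝ :=
  pd j (Γ l k i) x - pd k (Γ l j i) x
    + ∑ m, Γ m k i x * Γ l j m x - ∑ m, Γ m j i x * Γ l k m x

/-- Covariant derivative of the torsion:
`T^j_{ab;s} = ∂_s T^j_{ab} + Γ^j_{sp} T^p_{ab} − Γ^p_{sa} T^j_{pb} − Γ^p_{sb} T^j_{ap}`. -/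
noncomputable def covT (Γ : Fin n → Fin n → Fin n → Pt n → ℝ) (j a b s : Fin n)
    (x : Pt n) : ℝ :=
  pd s (Tor Γ j a b) x + ∑ p, Γ j s p x * Tor Γ p a b x
    - ∑ p, Γ p s a x * Tor Γ j p b x - ∑ p, Γ p s b x * Tor Γ j a p x

/-- The pair `(ω, ∇)` is Poisson-compatible on `U`. -/
def PoissonCompat (U : Set (Pt n)) (ω : Fin n → Fin n → Pt n → ℝ)
    (Γ : Fin n → Fin n → Fin n → Pt n → ℝ) : Prop :=
  ∀ i j m, ∀ x ∈ U,
    pd m (ω i j) x + ∑ k, ω k j x * Γ i k m x + ∑ k, ω i k x * Γ j k m x = 0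

/-- The 2-form `H^{ij} = (1/4) ω^{is}(T^j_{nm;s} − 2 R^j_{nms}) dx^m ∧ dx^n`
(as a coefficient family, slots `(a 0, a 1) = (m, n)`). -/
noncomputable def Hform (ω : Fin n → Fin n → Pt n → ℝ)
    (Γ : Fin n → Fin n → Fin n → Pt n → ℝ) (i j : Fin n) : Form n := fun a x =>
  (1 / 4 : ℝ) * ∑ s, ω i s x *
    ((covT Γ j (a 1) (a 0) s x - 2 * Rc Γ j (a 1) (a 0) s x)
      - (covT Γ j (a 0) (a 1) s x - 2 * Rc Γ j (a 0) (a 1) s x))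

/-- The `λ`-correction term `(1/2) ω^{ij} ∇_i ξ ∧ ∇_j η` of the functorial product `∧_Q`. -/
noncomputable def Qcorr (ω : Fin n → Fin n → Pt n → ℝ)
    (Γ : Fin n → Fin n → Fin n → Pt n → ℝ) (p q : ℕ) (ξ η : Form n) : Form n :=
  (2⁻¹ : ℝ) • ∑ i, ∑ j, fmul (ω i j) (wedge p q (nabla Γ i p ξ) (nabla Γ j q η))

/-- The coordinate 1-form `dx^i`. -/
def dxF (i : Fin n) : Form n := fun a _ => if a 0 = i then 1 else 0

/-! A matrix of functions `A^k_i` acts on forms as a derivation, by contracting each index of `ξ`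
in turn; invariantly this is `A · ξ = A^k_i dx^i ∧ (∂_k ⌟ ξ)`. In `v ⌟ dξ + d(v ⌟ ξ)` the terms
which differentiate `ξ` in a direction other than `v` cancel, and antisymmetry moves the index
contracted with `v` back to its slot, leaving `v^j ∂_j ξ + (∂v) · ξ`. On the other hand
`v^j ∇_j ξ = v^j ∂_j ξ - (v^j Γ^k_{ji}) · ξ`, and the torsion turns `Γ^k_{im} v^m` into
`v^j Γ^k_{ji}`, so the connection terms cancel. -/

section Permutations

open Equiv Finset

lemma card_nsmul_sum_perm_apply {α M : Type*} [Fintype α] [DecidableEq α] [AddCommMonoid M]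
    (f : α → M) (a : α) :
    Fintype.card α • ∑ σ : Perm α, f (σ a) = (Fintype.card α).factorial • ∑ b, f b := by
  have independent_of_base (b : α) : ∑ σ : Perm α, f (σ a) = ∑ σ : Perm α, f (σ b) :=
    Fintype.sum_equiv (Equiv.mulRight (swap a b)) _ _ fun σ => by simp
  calc Fintype.card α • ∑ σ : Perm α, f (σ a)
      = ∑ b, ∑ σ : Perm α, f (σ b) := by
        simp only [← independent_of_base, sum_const, card_univ]
    _ = ∑ σ : Perm α, ∑ b, f (σ b) := sum_comm
    _ = (Fintype.card α).factorial • ∑ b, f b := by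
        simp only [Equiv.sum_comp, sum_const, card_univ, Fintype.card_perm]

lemma IsAnti.apply_eq_sign_mul {p : ℕ} {ξ : Form n} (hanti : IsAnti p ξ) (hdep : DependsOn p ξ)
    (σ : Perm (Fin p)) {a b : ℕ → Fin n} (hab : ∀ t : Fin p, b t = a (σ t)) (x : Pt n) :
    ξ b x = ((Perm.sign σ : ℤ) : ℝ) * ξ a x := by
  induction σ using Perm.swap_induction_on generalizing a with
  | one => simp [hdep b a fun t ht => hab ⟨t, ht⟩]
  | swap_mul f i j hij ih =>
    have hswap : ξ (fun t => a (swap (i : ℕ) j t)) x = -ξ a x :=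
      hanti a i j i.2 j.2 (Fin.val_ne_of_ne hij) x
    have hb (t : Fin p) : b t = a (swap (i : ℕ) j (f t)) := by
      rw [hab, Perm.mul_apply, Fin.val_injective.map_swap]
    rw [ih (a := fun t => a (swap (i : ℕ) j t)) hb, hswap, Perm.sign_mul, Perm.sign_swap hij]
    simp

end Permutations

section MultiIndices

/-- The multi-index `m, a 0, a 1, …`, at which the interior product `∂_m ⌟ ξ` evaluates `ξ`. -/
def prepend (m : Fin n) (a : ℕ → Fin n) : ℕ → Fin n := fun t => if t = 0 then m else a (t - 1)

/-- The multi-index `a` with its `k`-th entry omitted, as in the exterior derivative. -/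
def removeSlot (k : ℕ) (a : ℕ → Fin n) : ℕ → Fin n := fun t => if t < k then a t else a (t + 1)

variable (k : ℕ) (m : Fin n) (a : ℕ → Fin n)

lemma removeSlot_zero_prepend : removeSlot 0 (prepend m a) = a := by
  funext t
  simp [removeSlot, prepend]

lemma removeSlot_succ_prepend :
    removeSlot (k + 1) (prepend m a) = prepend m (removeSlot k a) := by
  funext t
  cases t <;> simp [removeSlot, prepend]

lemma prepend_removeSlot_zero : prepend m (removeSlot 0 a) = Function.update a 0 m := by
  funext t
  cases t <;> simp [removeSlot, prepend]

lemma removeSlot_comp_swap_succ :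
    removeSlot k (a ∘ Equiv.swap k (k + 1)) = removeSlot (k + 1) a := by
  funext t
  simp only [removeSlot, Function.comp_apply, Equiv.swap_apply_def]
  grind

end MultiIndices

lemma IsAnti.apply_prepend_removeSlot {p : ℕ} {ξ : Form n} (hanti : IsAnti p ξ) {k : ℕ}
    (hk : k < p) (m : Fin n) (a : ℕ → Fin n) (x : Pt n) :
    ξ (prepend m (removeSlot k a)) x = (-1) ^ k * ξ (Function.update a k m) x := by
  induction k generalizing a with
  | zero => simp [prepend_removeSlot_zero]
  | succ k ih =>
    have hswap : Function.update (a ∘ Equiv.swap k (k + 1)) k m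
        = Function.update a (k + 1) m ∘ Equiv.swap k (k + 1) := by
      simp [Function.update_comp_equiv]
    calc ξ (prepend m (removeSlot (k + 1) a)) x
        = (-1) ^ k * ξ (Function.update a (k + 1) m ∘ Equiv.swap k (k + 1)) x := by
          rw [← removeSlot_comp_swap_succ, ih (by lia), hswap]
      _ = (-1) ^ k * -ξ (Function.update a (k + 1) m) x := by
          rw [← hanti _ k (k + 1) (by lia) hk (by lia) x, Function.comp_def]
      _ = (-1) ^ (k + 1) * ξ (Function.update a (k + 1) m) x := by ring

section CoordinateFormulas

variable {p : ℕ} (v : Fin n → Pt n → ℝ) (ξ : Form n) (a : ℕ → Fin n)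

lemma pd_sum_mul {ι : Type*} [Fintype ι] {f g : ι → Pt n → ℝ} {x : Pt n}
    (hf : ∀ m, DifferentiableAt ℝ (f m) x) (hg : ∀ m, DifferentiableAt ℝ (g m) x) (i : Fin n) :
    pd i (fun y => ∑ m, f m y * g m y) x
      = ∑ m, pd i (f m) x * g m x + ∑ m, f m x * pd i (g m) x := by
  simp only [pd, fderiv_fun_sum fun m _ => (hf m).fun_mul (hg m), fderiv_fun_mul (hf _) (hg _),
    sum_apply, add_apply, smul_apply, smul_eq_mul, ← Finset.sum_add_distrib]
  exact Finset.sum_congr rfl fun m _ => by ring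

lemma extd_apply (x : Pt n) :
    extd p ξ a x = ∑ k : Fin (p + 1), (-1) ^ (k : ℕ) * pd (a k) (ξ (removeSlot k a)) x :=
  rfl

lemma intr_apply (hp : p ≠ 0) (m : Fin n) : intr p m ξ a = ξ (prepend m a) := by
  simp only [intr, if_neg hp]
  rfl

lemma iprod_apply (hp : p ≠ 0) :
    iprod p v ξ a = fun y => ∑ m, v m y * ξ (prepend m a) y := by
  simp only [iprod, if_neg hp]
  rfl

lemma dependsOn_dxF (i : Fin n) : DependsOn 1 (dxF i) := fun a b hab => by
  funext x
  simp only [dxF, hab 0 one_pos]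

end CoordinateFormulas

section EndomorphismAction

/-- The action of an endomorphism field on `p`-forms as a derivation: each index of `ξ` is
contracted with `A` in turn. The entry `A i k` is the coefficient `A^k_i` of `dx^i ⊗ ∂_k`. -/
def endAct (p : ℕ) (A : Fin n → Fin n → Pt n → ℝ) (ξ : Form n) : Form n := fun a x =>
  ∑ j : Fin p, ∑ k, A (a j) k x * ξ (Function.update a j k) x

variable (p : ℕ) (ξ : Form n) (a : ℕ → Fin n) (x : Pt n)

lemma endAct_add (A B : Fin n → Fin n → Pt n → ℝ) :
    endAct p (A + B) ξ = endAct p A ξ + endAct p B ξ := by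
  funext a x
  simp only [endAct, Pi.add_apply, add_mul, Finset.sum_add_distrib]

lemma endAct_sum_mul {ι : Type*} [Fintype ι] (f : ι → Pt n → ℝ)
    (A : ι → Fin n → Fin n → Pt n → ℝ) :
    endAct p (fun i k y => ∑ s, f s y * A s i k y) ξ a x = ∑ s, f s x * endAct p (A s) ξ a x := by
  simp only [endAct, Finset.sum_mul, Finset.mul_sum, mul_assoc]
  exact Finset.sum_comm_cycle

lemma nabla_apply (Γ : Fin n → Fin n → Fin n → Pt n → ℝ) (i : Fin n) :
    nabla Γ i p ξ a x = pd i (ξ a) x - endAct p (fun l m => Γ m i l) ξ a x := by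
  have update_eq_ite (k : ℕ) (m : Fin n) :
      Function.update a k m = fun t => if t = k then m else a t :=
    funext fun t => Function.update_apply a k m t
  simp only [nabla, endAct, update_eq_ite]

lemma sum_fmul_nabla (Γ : Fin n → Fin n → Fin n → Pt n → ℝ) (v : Fin n → Pt n → ℝ) :
    (∑ j, fmul (v j) (nabla Γ j p ξ)) a x
      = ∑ j, v j x * pd j (ξ a) x
        - endAct p (fun i k y => ∑ j, v j y * Γ k j i y) ξ a x := by
  rw [endAct_sum_mul p ξ a x v fun j i k => Γ k j i]
  simp only [Finset.sum_apply, fmul, nabla_apply, mul_sub, Finset.sum_sub_distrib]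

end EndomorphismAction

section WedgeProduct

lemma IsAnti.apply_prepend_perm {q : ℕ} {ξ : Form n} (hanti : IsAnti (1 + q) ξ)
    (hdep : DependsOn (1 + q) ξ) (σ : Equiv.Perm (Fin (1 + q))) (k : Fin n) {a b : ℕ → Fin n}
    (hab : ∀ t (ht : t < q), b t = a (σ ⟨1 + t, by lia⟩)) (x : Pt n) :
    ξ (prepend k b) x
      = ((Equiv.Perm.sign σ : ℤ) : ℝ) * ξ (Function.update a (σ 0) k) x := by
  refine hanti.apply_eq_sign_mul hdep σ (fun ⟨t, ht⟩ => ?_) x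
  rcases t with _ | t
  · simp [prepend]
  · have hne : ((σ ⟨t + 1, ht⟩ : Fin (1 + q)) : ℕ) ≠ (σ 0 : Fin (1 + q)) :=
      Fin.val_ne_of_ne (σ.injective.ne (by simp [Fin.ext_iff]))
    simp [prepend, Function.update_of_ne hne, hab t (by lia), Nat.add_comm 1 t]

lemma wedge_one_apply {q : ℕ} {α : Form n} (hα : DependsOn 1 α) (η : Form n) (a : ℕ → Fin n)
    (x : Pt n) :
    wedge 1 q α η a x
      = (q.factorial : ℝ)⁻¹ * ∑ σ : Equiv.Perm (Fin (1 + q)),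
          ((Equiv.Perm.sign σ : ℤ) : ℝ) * α (fun _ => a (σ 0)) x *
            η (fun t => if h : t < q then a (σ ⟨1 + t, by lia⟩ : Fin (1 + q)) else a t) x := by
  rw [wedge, Nat.factorial_one, one_mul]
  congr 1
  refine Finset.sum_congr rfl fun σ _ => ?_
  rw [hα _ (fun _ => a (σ 0)) fun t ht => by simp [Nat.lt_one_iff.mp ht]]

lemma wedge_one_intr {p : ℕ} {α ξ : Form n} (hα : DependsOn 1 α) (hdep : DependsOn p ξ)
    (hanti : IsAnti p ξ) (k : Fin n) (a : ℕ → Fin n) (x : Pt n) :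
    wedge 1 (p - 1) α (intr p k ξ) a x
      = ∑ j : Fin p, α (fun _ => a j) x * ξ (Function.update a j k) x := by
  rcases eq_or_ne p 0 with rfl | hp
  · simp [wedge, intr]
  obtain ⟨q, rfl⟩ : ∃ q, p = 1 + q := ⟨p - 1, by lia⟩
  set F : Fin (1 + q) → ℝ := fun j => α (fun _ => a j) x * ξ (Function.update a j k) x
  -- The sign in the wedge product cancels against the sign from reordering the indices of `ξ`.
  have term_eq (σ : Equiv.Perm (Fin (1 + q))) :
      ((Equiv.Perm.sign σ : ℤ) : ℝ) * α (fun _ => a (σ 0)) x * intr (1 + q) k ξ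
        (fun t => if h : t < q then a (σ ⟨1 + t, by lia⟩ : Fin (1 + q)) else a t) x
      = F (σ 0) := by
    have hsign : ((Equiv.Perm.sign σ : ℤ) : ℝ) * ((Equiv.Perm.sign σ : ℤ) : ℝ) = 1 := by
      exact_mod_cast Int.units_coe_mul_self (Equiv.Perm.sign σ)
    rw [intr_apply _ _ hp, hanti.apply_prepend_perm hdep σ k (a := a) fun t ht => by simp [ht]]
    linear_combination F (σ 0) * hsign
  have sum_perm : ∑ σ : Equiv.Perm (Fin (1 + q)), F (σ 0) = q.factorial * ∑ j, F j := by
    have h := card_nsmul_sum_perm_apply F 0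
    have hfact : (1 + q).factorial = (1 + q) * q.factorial := by
      rw [Nat.add_comm, Nat.factorial_succ]
    simp only [Fintype.card_fin, hfact, nsmul_eq_mul, Nat.cast_mul, mul_assoc] at h
    exact mul_left_cancel₀ (Nat.cast_ne_zero.mpr hp) h
  rw [Nat.add_sub_cancel_left, wedge_one_apply hα, Finset.sum_congr rfl fun σ _ => term_eq σ,
    sum_perm, inv_mul_cancel_left₀ (Nat.cast_ne_zero.mpr q.factorial_ne_zero)]

lemma sum_fmul_wedge_dxF_intr {p : ℕ} {ξ : Form n} (hdep : DependsOn p ξ) (hanti : IsAnti p ξ)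
    (A : Fin n → Fin n → Pt n → ℝ) (a : ℕ → Fin n) (x : Pt n) :
    (∑ i, ∑ k, fmul (A i k) (wedge 1 (p - 1) (dxF i) (intr p k ξ))) a x = endAct p A ξ a x := by
  simp only [Finset.sum_apply, fmul, wedge_one_intr (dependsOn_dxF _) hdep hanti, Finset.mul_sum,
    endAct]
  rw [Finset.sum_comm_cycle]
  refine Finset.sum_congr rfl fun j _ => ?_
  rw [Finset.sum_comm]
  simp [dxF]

end WedgeProduct

section CartanFormula

variable {v : Fin n → Pt n → ℝ} {p : ℕ} {ξ : Form n} {x : Pt n} (a : ℕ → Fin n)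

lemma iprod_extd :
    iprod (p + 1) v (extd p ξ) a x
      = ∑ m, v m x * pd m (ξ a) x
        - ∑ j : Fin p, (-1) ^ (j : ℕ) *
            ∑ m, v m x * pd (a j) (ξ (prepend m (removeSlot j a))) x := by
  have extd_prepend (m : Fin n) : extd p ξ (prepend m a) x
      = pd m (ξ a) x
        - ∑ j : Fin p, (-1) ^ (j : ℕ) * pd (a j) (ξ (prepend m (removeSlot j a))) x := by
    rw [extd_apply, Fin.sum_univ_succ]
    simp [removeSlot_zero_prepend, removeSlot_succ_prepend, pow_succ, sub_eq_add_neg, prepend]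
  simp only [iprod_apply v _ _ p.succ_ne_zero, extd_prepend, mul_sub, Finset.sum_sub_distrib,
    Finset.mul_sum]
  rw [Finset.sum_comm]
  simp only [mul_left_comm]

lemma extd_iprod (hv : ∀ m, DifferentiableAt ℝ (v m) x) (hξ : ∀ b, DifferentiableAt ℝ (ξ b) x) :
    extd (p - 1) (iprod p v ξ) a x
      = ∑ j : Fin p, (-1) ^ (j : ℕ) * ∑ m, pd (a j) (v m) x * ξ (prepend m (removeSlot j a)) x
        + ∑ j : Fin p, (-1) ^ (j : ℕ) *
            ∑ m, v m x * pd (a j) (ξ (prepend m (removeSlot j a))) x := by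
  cases p with
  | zero => simp [extd, iprod, pd]
  | succ q =>
    simp only [Nat.add_sub_cancel, extd_apply, iprod_apply v ξ _ q.succ_ne_zero,
      pd_sum_mul hv fun _ => hξ _, mul_add, Finset.sum_add_distrib]

lemma iprod_extd_add_extd_iprod (hanti : IsAnti p ξ) (hv : ∀ m, DifferentiableAt ℝ (v m) x)
    (hξ : ∀ b, DifferentiableAt ℝ (ξ b) x) :
    iprod (p + 1) v (extd p ξ) a x + extd (p - 1) (iprod p v ξ) a x
      = ∑ m, v m x * pd m (ξ a) x + endAct p (fun i k => pd i (v k)) ξ a x := by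
  have endAct_eq : endAct p (fun i k => pd i (v k)) ξ a x
      = ∑ j : Fin p, (-1) ^ (j : ℕ) *
          ∑ m, pd (a j) (v m) x * ξ (prepend m (removeSlot j a)) x := by
    refine Finset.sum_congr rfl fun j _ => ?_
    rw [Finset.mul_sum]
    refine Finset.sum_congr rfl fun m _ => ?_
    rw [hanti.apply_prepend_removeSlot j.2, mul_left_comm, ← mul_assoc ((-1) ^ _), ← mul_pow]
    simp
  rw [iprod_extd, extd_iprod a hv hξ, endAct_eq]
  ring

lemma sum_mul_add_sum_mul_Tor (Γ : Fin n → Fin n → Fin n → Pt n → ℝ) (v : Fin n → Pt n → ℝ)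
    (i k : Fin n) (x : Pt n) :
    ∑ m, Γ k i m x * v m x + ∑ j, v j x * Tor Γ k j i x = ∑ j, v j x * Γ k j i x := by
  rw [← Finset.sum_add_distrib]
  exact Finset.sum_congr rfl fun j _ => by rw [Tor]; ring

theorem statement_13_general (Γ : Fin n → Fin n → Fin n → Pt n → ℝ)
    (hdep : DependsOn p ξ) (hanti : IsAnti p ξ)
    (hv : ∀ m, DifferentiableAt ℝ (v m) x) (hξ : ∀ b, DifferentiableAt ℝ (ξ b) x) :
    iprod (p + 1) v (extd p ξ) a x + extd (p - 1) (iprod p v ξ) a x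
      = (∑ j, fmul (v j) (nabla Γ j p ξ)) a x
        + (∑ i, ∑ k,
            fmul
              (fun y => (pd i (v k) y + ∑ m, Γ k i m y * v m y)
                + ∑ j, v j y * Tor Γ k j i y)
              (wedge 1 (p - 1) (dxF i) (intr p k ξ))) a x := by
  have coeff_eq : (fun i k y => (pd i (v k) y + ∑ m, Γ k i m y * v m y)
        + ∑ j, v j y * Tor Γ k j i y)
      = (fun i k => pd i (v k)) + fun i k y => ∑ j, v j y * Γ k j i y := by
    funext i k y
    simp only [Pi.add_apply, add_assoc, sum_mul_add_sum_mul_Tor]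
  rw [iprod_extd_add_extd_iprod a hanti hv hξ, sum_fmul_nabla, sum_fmul_wedge_dxF_intr hdep hanti,
    coeff_eq, endAct_add, Pi.add_apply, Pi.add_apply]
  ring

end CartanFormula

/-- Cartan-type formula: for a vector field `v` and a `p`-form `ξ`,
`v⌟dξ + d(v⌟ξ) = v^j ∇_j ξ
  + Σ_{i,k} [(∂_i v^k + Γ^k_{im} v^m) + v^j T^k_{ji}] dx^i ∧ (∂_k⌟ξ)`. -/
theorem statement_13 (U : Set (Pt n)) (hU : IsOpen U)
    (Γ : Fin n → Fin n → Fin n → Pt n → ℝ)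
    (hΓs : ∀ i j k, ContDiffOn ℝ (⊤ : ℕ∞) (Γ i j k) U)
    (v : Fin n → Pt n → ℝ) (hvs : ∀ m, ContDiffOn ℝ (⊤ : ℕ∞) (v m) U)
    (p : ℕ) (ξ : Form n) (hξ : IsPForm U p ξ) :
    ∀ (a : ℕ → Fin n), ∀ x ∈ U,
      iprod (p + 1) v (extd p ξ) a x + extd (p - 1) (iprod p v ξ) a x
        = (∑ j, fmul (v j) (nabla Γ j p ξ)) a x
          + (∑ i, ∑ k,
              fmul
                (fun y => (pd i (v k) y + ∑ m, Γ k i m y * v m y)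
                  + ∑ j, v j y * Tor Γ k j i y)
                (wedge 1 (p - 1) (dxF i) (intr p k ξ))) a x := by
  intro a x hx
  have diffAt {f : Pt n → ℝ} (hf : ContDiffOn ℝ (⊤ : ℕ∞) f U) : DifferentiableAt ℝ f x :=
    (hf.contDiffAt (hU.mem_nhds hx)).differentiableAt (by simp)
  exact statement_13_general a Γ hξ.1 hξ.2.1 (diffAt <| hvs ·) (diffAt <| hξ.2.2 ·)

end Stmt13
end
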